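/- Let G be the ℓ×ℓ grid with n = ℓ² vertices, log₂ n ≥ 2²⁷, and let M be a set of demand pairs whose sources all lie on the top row R* of G. Let η = 2^⌈√(log₂ n)⌉, let ρ be a positive integer with ρ ≤ √(log₂ n), let d_h = η^{ρ−h+3} for 1 ≤ h ≤ ρ, and let H̃ = (Q₁,…,Q_ρ) be a hierarchical system of squares of G whose squares are disjoint from R*. Let M̃ ⊆ M be the set of demand pairs belonging to H̃. Let OPT > 0 and suppose some subset of M̃ of size at least OPT/2^{2√(log₂ n)} is routable via node-disjoint paths in G. Then there exists a set M̃* ⊆ M̃ of at least OPT/2^{8√(log₂ n)·log₂ log₂ n} demand pairs such that (i) all demand pairs of M̃* can be simultaneously routed via node-disjoint paths in G, and (ii) for every 1 ≤ h ≤ ρ, every square of Q_h has the (1/η²)-shadow property with respect to M̃*. -/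

import Mathlib

/-!
Thin out the routable pairs level by level. A shadow only shrinks when demand pairs are discarded,
so later levels do not spoil earlier ones; each level costs a factor `O(log n)` and leaves every
square of side `d` with a shadow of `O(d log n)` sources. Finally keeping only every `K`-th source,
with `K = Θ(η² log n)`, turns these shadows into shadows of at most `d / η²` sources. A demand pair
belonging to the system forces `ℓ ≥ η ^ (ρ + 2)`, so `ρ` is at most about `√(log n) / 2` and the
total loss stays below `2 ^ (8 √(log n) log log n)`.

At a single level, group the sources into classes according to the square in which their paths end.
If two sources of one class interleave with two of another, the four paths and the two squares form
two connected sets that must meet by planarity, so one of the four paths visits the square of the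
other class. Since disjoint paths need distinct vertices of the boundary of a square to enter it, at
most `4d` of them visit a given square. Hence, up to `4d` exceptional sources per class, distinct
classes do not cross. Planarity itself is the statement that the signed number of times a walk with
both ends on the top row crosses the leftward ray from a vertex is constant along every path
avoiding the walk.

To thin out such classes, keep only those of about the same size `8t` and in each of them a core of
`t` sources having a neighbourhood at most half as long as the class. If the cores of two classes
overlap, then either one class contains many exceptional sources of the other, or the neighbourhood
of one contains most of the other, so that the lengths of the classes differ by a factor of at
least two. Every source is thus covered by only `O((d / t + 1) log n)` cores, and by averaging at
least half of the cores span few sources.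
-/


open Finset

abbrev Vtx := ℕ × ℕ
abbrev DPair := Vtx × Vtx

/-- The grid graph on rows `r₁..r₂` and columns `c₁..c₂` (vertices outside are isolated). -/
def rectGrid (r₁ r₂ c₁ c₂ : ℕ) : SimpleGraph Vtx :=
  SimpleGraph.fromRel (fun u v =>
    r₁ ≤ u.1 ∧ u.1 ≤ r₂ ∧ c₁ ≤ u.2 ∧ u.2 ≤ c₂ ∧
    r₁ ≤ v.1 ∧ v.1 ≤ r₂ ∧ c₁ ≤ v.2 ∧ v.2 ≤ c₂ ∧
    ((u.1 = v.1 ∧ u.2 + 1 = v.2) ∨ (u.2 = v.2 ∧ u.1 + 1 = v.1)))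

/-- The ℓ×ℓ grid graph. -/
def gridG (ℓ : ℕ) : SimpleGraph Vtx := rectGrid 1 ℓ 1 ℓ

/-- The demand pairs of `M` can be simultaneously routed via node-disjoint paths in `G`. -/
def NodeDisjointRoutable {V : Type*} (G : SimpleGraph V) (M : Finset (V × V)) : Prop :=
  ∃ P : ∀ m : {m // m ∈ M}, G.Walk m.val.1 m.val.2,
    (∀ m, (P m).IsPath) ∧
    ∀ m m' : {m // m ∈ M}, m ≠ m' → ∀ x, x ∈ (P m).support → x ∉ (P m').support

def OnTopRow (ℓ : ℕ) (v : Vtx) : Prop := v.1 = 1 ∧ 1 ≤ v.2 ∧ v.2 ≤ ℓ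

def OnBoundary (ℓ : ℕ) (v : Vtx) : Prop :=
  1 ≤ v.1 ∧ v.1 ≤ ℓ ∧ 1 ≤ v.2 ∧ v.2 ≤ ℓ ∧ (v.1 = 1 ∨ v.1 = ℓ ∨ v.2 = 1 ∨ v.2 = ℓ)

def DistinctSources (M : Finset DPair) : Prop := ∀ m ∈ M, ∀ m' ∈ M, m.1 = m'.1 → m = m'
def DistinctDests (M : Finset DPair) : Prop := ∀ m ∈ M, ∀ m' ∈ M, m.2 = m'.2 → m = m'

noncomputable def lg (n : ℕ) : ℝ := Real.logb 2 n

def IsIntervalIn (W : ℕ) (I : Finset ℕ) : Prop :=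
  ∃ a b : ℕ, 1 ≤ a ∧ a ≤ b ∧ b ≤ W ∧ I = Finset.Icc a b

def IntSeparated (d : ℕ) (I J : Finset ℕ) : Prop :=
  ∀ i ∈ I, ∀ j ∈ J, (d : ℤ) < |(i : ℤ) - (j : ℤ)|

def IsCanonicalIntervals (W d : ℕ) (Is : Finset (Finset ℕ)) : Prop :=
  (∀ I ∈ Is, IsIntervalIn W I ∧ I.card = d) ∧
    ∀ I ∈ Is, ∀ J ∈ Is, I ≠ J → IntSeparated d I J

abbrev SquareSpec := Finset ℕ × Finset ℕ

def memSquare (v : Vtx) (Q : SquareSpec) : Prop := v.1 ∈ Q.1 ∧ v.2 ∈ Q.2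

instance (v : Vtx) (Q : SquareSpec) : Decidable (memSquare v Q) := by
  unfold memSquare; infer_instance

def IsCanonicalSquares (W d : ℕ) (Qs : Finset SquareSpec) : Prop :=
  ∃ I₁ I₂ : Finset (Finset ℕ),
    IsCanonicalIntervals W d I₁ ∧ IsCanonicalIntervals W d I₂ ∧ Qs = I₁ ×ˢ I₂

/-- The number of sources of `M` lying on the shadow of the square `Q` with respect to `M`,
i.e. on the shortest sub-path of the top row containing all sources of pairs of `M` whose
destination lies in `Q`. -/
def shadowCount (M : Finset DPair) (Q : SquareSpec) : ℕ :=
  (M.filter (fun m => ∃ m₁ ∈ M, memSquare m₁.2 Q ∧ ∃ m₂ ∈ M, memSquare m₂.2 Q ∧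
      m₁.1.2 ≤ m.1.2 ∧ m.1.2 ≤ m₂.1.2)).card

/-- The square `Q` (of side `d`) has the β-shadow property with respect to `M`. -/
def HasShadowProp (β : ℝ) (d : ℕ) (M : Finset DPair) (Q : SquareSpec) : Prop :=
  (shadowCount M Q : ℝ) ≤ β * d

/-- A hierarchical system of squares `Qs 1, …, Qs ρ`: level `h` is a `d_h`-canonical family
of squares (with `d_h = η^(ρ-h+3)`), and every level-`h` square is contained in a
level-`(h-1)` square. -/
def IsHierSquares (W η ρ : ℕ) (Qs : ℕ → Finset SquareSpec) : Prop :=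
  (∀ h, 1 ≤ h → h ≤ ρ → IsCanonicalSquares W (η ^ (ρ - h + 3)) (Qs h)) ∧
    ∀ h, 1 < h → h ≤ ρ → ∀ Q ∈ Qs h, ∃ Q' ∈ Qs (h - 1), Q.1 ⊆ Q'.1 ∧ Q.2 ⊆ Q'.2

section Combinatorics

variable {α κ : Type*}

/-! ### Counting lemmas -/

lemma card_le_of_inDegree_le_of_total (s : Finset κ) (r : κ → κ → Prop)
    [DecidableRel r] (q : ℕ) (hin : ∀ j ∈ s, #{i ∈ s | r i j} ≤ q)
    (htotal : ∀ i ∈ s, ∀ j ∈ s, i ≠ j → r i j ∨ r j i) : #s ≤ 2 * q + 1 := by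
  classical
  have hsplit : ∀ i ∈ s, #s ≤ #{j ∈ s | r j i} + #{j ∈ s | r i j} + 1 := fun i hi => by
    rw [← card_erase_add_one hi]
    gcongr
    refine (card_le_card fun j hj => ?_).trans (card_union_le _ _)
    obtain ⟨hji, hj⟩ := mem_erase.1 hj
    simpa only [mem_union, mem_filter, hj, true_and] using htotal j hj i hi hji
  have hout : ∑ i ∈ s, #{j ∈ s | r i j} = ∑ j ∈ s, #{i ∈ s | r i j} :=
    sum_card_bipartiteAbove_eq_sum_card_bipartiteBelow r
  have hsum : #s * #s ≤ #s * (2 * q + 1) :=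
    calc #s * #s = ∑ _i ∈ s, #s := by rw [sum_const, smul_eq_mul]
      _ ≤ ∑ i ∈ s, (#{j ∈ s | r j i} + #{j ∈ s | r i j} + 1) := sum_le_sum hsplit
      _ = 2 * ∑ i ∈ s, #{j ∈ s | r j i} + #s := by
        rw [sum_add_distrib, sum_add_distrib, hout, sum_const, smul_eq_mul]; ring
      _ ≤ 2 * (#s * q) + #s := by
        gcongr; simpa only [smul_eq_mul] using sum_le_card_nsmul s _ q hin
      _ = #s * (2 * q + 1) := by ring
  rcases s.eq_empty_or_nonempty with rfl | hs
  · simp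
  · exact Nat.le_of_mul_le_mul_left hsum hs.card_pos

lemma card_le_two_mul_card_filter_le_of_sum_le {s : Finset κ} {w : κ → ℕ} {B : ℕ}
    (h : ∑ i ∈ s, w i ≤ #s * B) : #s ≤ 2 * #{i ∈ s | w i ≤ 2 * B} := by
  have hlarge : #{i ∈ s | ¬ w i ≤ 2 * B} * (2 * B + 1) ≤ #s * B :=
    calc #{i ∈ s | ¬ w i ≤ 2 * B} * (2 * B + 1) ≤ ∑ i ∈ s with ¬ w i ≤ 2 * B, w i :=
          by simpa only [smul_eq_mul] using
            card_nsmul_le_sum _ w _ fun i hi => not_le.1 (mem_filter.1 hi).2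
      _ ≤ ∑ i ∈ s, w i := sum_le_sum_of_subset (filter_subset _ _)
      _ ≤ #s * B := h
  have hsplit := card_filter_add_card_filter_not (s := s) fun i => w i ≤ 2 * B
  nlinarith

lemma exists_card_biUnion_le_card_mul [DecidableEq α] {β : Type*} [DecidableEq β] (s : Finset κ)
    (C : κ → Finset α) {t : Finset β} (ht : t.Nonempty) {f : κ → β} (hf : ∀ i ∈ s, f i ∈ t) :
    ∃ b ∈ t, #(s.biUnion C) ≤ #t * #({i ∈ s | f i = b}.biUnion C) := by
  have hcover : s.biUnion C ⊆ t.biUnion fun b => {i ∈ s | f i = b}.biUnion C := fun a ha => by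
    obtain ⟨i, hi, ha⟩ := mem_biUnion.1 ha
    exact mem_biUnion.2 ⟨f i, hf i hi, mem_biUnion.2 ⟨i, mem_filter.2 ⟨hi, rfl⟩, ha⟩⟩
  refine exists_le_of_sum_le ht ?_
  rw [sum_const, smul_eq_mul, ← mul_sum]
  gcongr
  exact (card_le_card hcover).trans card_biUnion_le

lemma card_biUnion_le_mul_of_subset [DecidableEq α] {s : Finset κ} {C D : κ → Finset α} {k : ℕ}
    (hdisj : (s : Set κ).PairwiseDisjoint C) (hsub : ∀ i ∈ s, D i ⊆ C i)
    (hcard : ∀ i ∈ s, #(C i) ≤ k * #(D i)) : #(s.biUnion C) ≤ k * #(s.biUnion D) := by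
  rw [card_biUnion hdisj, card_biUnion fun i hi j hj hij =>
    (hdisj hi hj hij).mono (hsub i hi) (hsub j hj), mul_sum]
  exact sum_le_sum hcard

lemma card_filter_le_card_inter_le [DecidableEq α] {s : Finset κ} {C : κ → Finset α}
    (hdisj : (s : Set κ).PairwiseDisjoint C) (E : Finset α) {t : ℕ} (ht : 0 < t) :
    #{i ∈ s | t ≤ #(C i ∩ E)} ≤ #E / t := by
  rw [Nat.le_div_iff_mul_le ht]
  calc #{i ∈ s | t ≤ #(C i ∩ E)} * t
      ≤ ∑ i ∈ s with t ≤ #(C i ∩ E), #(C i ∩ E) :=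
        card_nsmul_le_sum _ _ _ fun i hi => (mem_filter.1 hi).2
    _ ≤ ∑ i ∈ s, #(C i ∩ E) := sum_le_sum_of_subset (filter_subset _ _)
    _ = #(s.biUnion fun i => C i ∩ E) := (card_biUnion fun i hi j hj hij =>
        (hdisj hi hj hij).mono inter_subset_left inter_subset_left).symm
    _ ≤ #E := card_le_card (biUnion_subset.2 fun _ _ => inter_subset_right)

lemma exists_mem_sdiff_of_card_inter_lt [DecidableEq α] {A E : Finset α} {t : ℕ}
    {p : α → Prop} [DecidablePred p] (hE : #(A ∩ E) < t) (hp : t ≤ #{a ∈ A | p a}) :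
    ∃ a ∈ A \ E, p a := by
  obtain ⟨a, ha, haE⟩ := exists_mem_notMem_of_card_lt_card (hE.trans_le hp)
  obtain ⟨haA, hpa⟩ := mem_filter.1 ha
  exact ⟨a, mem_sdiff.2 ⟨haA, fun h => haE (mem_inter.2 ⟨haA, h⟩)⟩, hpa⟩

lemma exists_subset_forall_of_antitone (s : Finset κ) (M : Finset α) (c : ℕ)
    (p : κ → Finset α → Prop) (hp : ∀ i ∈ s, Antitone (p i))
    (hthin : ∀ i ∈ s, ∀ A ⊆ M, ∃ B ⊆ A, #A ≤ c * #B ∧ p i B) :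
    ∃ B ⊆ M, #M ≤ c ^ #s * #B ∧ ∀ i ∈ s, p i B := by
  classical
  induction s using Finset.induction_on with
  | empty => exact ⟨M, Subset.rfl, by simp, by simp⟩
  | insert i s his ih =>
    obtain ⟨A, hAM, hA, hpA⟩ := ih (fun j hj => hp j (mem_insert_of_mem hj))
      fun j hj => hthin j (mem_insert_of_mem hj)
    obtain ⟨B, hBA, hB, hpB⟩ := hthin i (mem_insert_self i s) A hAM
    refine ⟨B, hBA.trans hAM, ?_,
      (forall_mem_insert _ _ _).2 ⟨hpB, fun j hj => hp j (mem_insert_of_mem hj) hBA (hpA j hj)⟩⟩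
    calc #M ≤ c ^ #s * #A := hA
      _ ≤ c ^ #s * (c * #B) := by gcongr
      _ = c ^ #(insert i s) * #B := by rw [card_insert_of_notMem his]; ring

/-! ### Enumerating, spanning and sampling finite sets of points on a line -/

section LinearOrder

variable [LinearOrder α]

lemma exists_strictMonoOn_image_range_eq [Nonempty α] (S : Finset α) :
    ∃ e : ℕ → α, StrictMonoOn e (Set.Iio #S) ∧ (range #S).image e = S := by
  refine ⟨fun i => if h : i < #S then S.orderEmbOfFin rfl ⟨i, h⟩ else Classical.arbitrary α,
    fun i hi j hj hij => ?_, ?_⟩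
  · rw [Set.mem_Iio] at hi hj
    simpa only [dif_pos hi, dif_pos hj, OrderEmbedding.lt_iff_lt, Fin.mk_lt_mk] using hij
  · refine eq_of_subset_of_card_le (image_subset_iff.2 fun i hi => ?_) ?_
    · rw [dif_pos (mem_range.1 hi)]
      exact S.orderEmbOfFin_mem rfl _
    · rw [card_image_of_injOn, card_range]
      intro i hi j hj hij
      rw [coe_range, Set.mem_Iio] at hi hj
      simpa only [dif_pos hi, dif_pos hj, EmbeddingLike.apply_eq_iff_eq, Fin.mk.injEq] using hij

lemma le_card_filter_of_enumeration {S : Finset α} {e : ℕ → α}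
    (he : StrictMonoOn e (Set.Iio #S)) (heS : (range #S).image e = S) {i t : ℕ}
    (hit : i + t ≤ #S) {p : α → Prop} [DecidablePred p]
    (hp : ∀ k, i ≤ k → k < i + t → p (e k)) : t ≤ #{a ∈ S | p a} := by
  have hcard : #((Ico i (i + t)).image e) = t := by
    rw [card_image_of_injOn, Nat.card_Ico, Nat.add_sub_cancel_left]
    refine he.injOn.mono fun k hk => ?_
    rw [coe_Ico, Set.mem_Ico] at hk
    exact hk.2.trans_le hit
  rw [← hcard]
  refine card_le_card (image_subset_iff.2 fun k hk => ?_)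
  rw [mem_Ico] at hk
  exact mem_filter.2 ⟨heS ▸ mem_image_of_mem e (mem_range.2 (hk.2.trans_le hit)),
    hp k hk.1 hk.2⟩

/-- The points of `S` lying between two points of `T`. With `S` the sources of all demand pairs
and `T` those of the pairs ending in a given square, these are the sources on the shadow of the
square. -/
def pointsBetween (S T : Finset α) : Finset α := {s ∈ S | ∃ a ∈ T, ∃ b ∈ T, a ≤ s ∧ s ≤ b}

lemma pointsBetween_empty (S : Finset α) : pointsBetween S ∅ = ∅ := by
  simp [pointsBetween]

lemma pointsBetween_mono_right (S : Finset α) {T T' : Finset α} (hT : T ⊆ T') :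
    pointsBetween S T ⊆ pointsBetween S T' := by
  refine monotone_filter_right S fun s _ => ?_
  rintro ⟨a, ha, b, hb, hs⟩
  exact ⟨a, hT ha, b, hT hb, hs⟩

lemma pointsBetween_subset_filter {S T : Finset α} {a b : α} (hT : ∀ x ∈ T, a ≤ x ∧ x ≤ b) :
    pointsBetween S T ⊆ {s ∈ S | a ≤ s ∧ s ≤ b} := by
  refine monotone_filter_right S fun s _ => ?_
  rintro ⟨x, hx, y, hy, hxs, hsy⟩
  exact ⟨(hT x hx).1.trans hxs, hsy.trans (hT y hy).2⟩

lemma pointsBetween_subset_of_card_le_one {S T : Finset α} (hT : #T ≤ 1) :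
    pointsBetween S T ⊆ T := by
  intro s hs
  rw [pointsBetween, mem_filter] at hs
  obtain ⟨-, a, ha, b, hb, has, hsb⟩ := hs
  obtain rfl := card_le_one.1 hT a ha b hb
  rwa [← le_antisymm has hsb]

lemma card_range_le_mul_card_filter_dvd (n : ℕ) {K : ℕ} (hK : 0 < K) :
    n ≤ K * #{i ∈ range n | K ∣ i} := by
  have hfiber : ∀ j ∈ {i ∈ range n | K ∣ i}, #{i ∈ range n | K * (i / K) = j} ≤ K := by
    intro j _
    refine (card_le_card_of_injOn (t := range K) (· % K) (fun i _ => ?_) ?_).trans_eq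
      (card_range K)
    · simpa using Nat.mod_lt i hK
    · intro i hi k hk hik
      rw [mem_coe, mem_filter] at hi hk
      rw [← Nat.div_add_mod i K, ← Nat.div_add_mod k K, hi.2, hk.2]
      exact congrArg (j + ·) hik
  have hmaps : ∀ i ∈ range n, K * (i / K) ∈ {i ∈ range n | K ∣ i} := fun i hi =>
    mem_filter.2 ⟨mem_range.2 ((Nat.mul_div_le i K).trans_lt (mem_range.1 hi)),
      Nat.dvd_mul_right K _⟩
  simpa only [card_range] using card_le_mul_card_image_of_maps_to hmaps K hfiber

lemma mul_card_filter_dvd_Icc_le (i j : ℕ) {K : ℕ} (hK : 0 < K) (hi : K ∣ i) (hij : i ≤ j) :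
    K * #{k ∈ Icc i j | K ∣ k} ≤ (j + 1 - i) + K := by
  obtain ⟨a, rfl⟩ := hi
  have hcard : #{k ∈ Icc (K * a) j | K ∣ k} ≤ #(Icc a (j / K)) := by
    refine card_le_card_of_injOn (· / K) (fun k hk => ?_) ?_
    · simp only [coe_filter, mem_Icc, Set.mem_ofPred_eq] at hk
      exact mem_Icc.2 ⟨(Nat.le_div_iff_mul_le hK).2 (by rw [mul_comm]; exact hk.1.1),
        Nat.div_le_div_right hk.1.2⟩
    · intro k hk l hl hkl
      exact (Nat.div_left_inj (mem_filter.1 hk).2 (mem_filter.1 hl).2).1 hkl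
  rw [Nat.card_Icc] at hcard
  calc K * #{k ∈ Icc (K * a) j | K ∣ k} ≤ K * (j / K + 1 - a) := by gcongr
    _ = K * (j / K) + K - K * a := by rw [Nat.mul_sub, mul_add, mul_one]
    _ ≤ (j + 1 - K * a) + K := by have := Nat.mul_div_le j K; omega

/-- The sample consists of every `K`-th point of `S`. -/
lemma exists_sample (S : Finset α) {K : ℕ} (hK : 0 < K) :
    ∃ S' ⊆ S, #S ≤ K * #S' ∧
      ∀ T ⊆ S', K * #(pointsBetween S' T) ≤ #(pointsBetween S T) + K := by
  rcases S.eq_empty_or_nonempty with rfl | ⟨a₀, -⟩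
  · exact ⟨∅, Subset.rfl, by simp, by simp [pointsBetween]⟩
  have : Nonempty α := ⟨a₀⟩
  obtain ⟨e, he, heS⟩ := exists_strictMonoOn_image_range_eq S
  have hinj : Set.InjOn e (range #S) := by rw [coe_range]; exact he.injOn
  refine ⟨{i ∈ range #S | K ∣ i}.image e, ?_, ?_, fun T hT => ?_⟩
  · exact (image_subset_image (filter_subset _ _)).trans_eq heS
  · rw [card_image_of_injOn (hinj.mono (coe_subset.2 (filter_subset _ _)))]
    exact card_range_le_mul_card_filter_dvd _ hK
  rcases T.eq_empty_or_nonempty with rfl | hTne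
  · simp [pointsBetween_empty]
  obtain ⟨i, hi, hei⟩ := mem_image.1 (hT (T.min'_mem hTne))
  obtain ⟨j, hj, hej⟩ := mem_image.1 (hT (T.max'_mem hTne))
  rw [mem_filter, mem_range] at hi hj
  have hij : i ≤ j := (he.le_iff_le hi.1 hj.1).1 (hei ▸ hej ▸ T.min'_le_max' hTne)
  have hsample : #(pointsBetween ({i ∈ range #S | K ∣ i}.image e) T) ≤
      #{k ∈ Icc i j | K ∣ k} := by
    refine (card_le_card fun s hs => ?_).trans (card_image_le (f := e))
    obtain ⟨hs, hsT⟩ := mem_filter.1 <| pointsBetween_subset_filter (a := e i) (b := e j)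
      (fun x hx => ⟨hei ▸ T.min'_le x hx, hej ▸ T.le_max' x hx⟩) hs
    obtain ⟨k, hk, rfl⟩ := mem_image.1 hs
    rw [mem_filter, mem_range] at hk
    refine mem_image_of_mem e (mem_filter.2 ⟨mem_Icc.2 ?_, hk.2⟩)
    exact ⟨(he.le_iff_le hi.1 hk.1).1 hsT.1, (he.le_iff_le hk.1 hj.1).1 hsT.2⟩
  have hfull : j + 1 - i ≤ #(pointsBetween S T) := by
    refine le_card_filter_of_enumeration he heS (i := i) (by omega) fun k hik hkj => ?_
    have hk : k < #S := by omega
    exact ⟨_, T.min'_mem hTne, _, T.max'_mem hTne, hei ▸ (he.le_iff_le hi.1 hk).2 hik,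
      hej ▸ (he.le_iff_le hk hj.1).2 (by omega)⟩
  calc K * _ ≤ K * #{k ∈ Icc i j | K ∣ k} := by gcongr
    _ ≤ (j + 1 - i) + K := mul_card_filter_dvd_Icc_le i j hK hi.2 hij
    _ ≤ #(pointsBetween S T) + K := by gcongr

/-- Finite sets `A`, `B` cross if `a < b < a' < b'` for some `a, a' ∈ A` and `b, b' ∈ B`. -/
def Crosses (A B : Finset α) : Prop :=
  ∃ a ∈ A, ∃ b ∈ B, ∃ a' ∈ A, ∃ b' ∈ B, a < b ∧ b < a' ∧ a' < b'

lemma nested_of_not_crosses_of_lt {A B : Finset α} (hdisj : Disjoint A B) (hAB : ¬ Crosses A B)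
    (hBA : ¬ Crosses B A) {x a₁ a₂ b₁ : α} (ha₁ : a₁ ∈ A) (ha₂ : a₂ ∈ A) (hb₁ : b₁ ∈ B)
    (hxa : x < a₂) (hbx : b₁ < x) (hab : a₁ < b₁) {b : α} (hb : b ∈ B) : a₁ < b ∧ b < a₂ := by
  have hne : ∀ {a}, a ∈ A → b ≠ a := fun ha h => disjoint_left.1 hdisj ha (h ▸ hb)
  constructor
  · by_contra! h
    exact hBA ⟨b, hb, a₁, ha₁, b₁, hb₁, a₂, ha₂, h.lt_of_ne (hne ha₁), hab, hbx.trans hxa⟩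
  · by_contra! h
    exact hAB ⟨a₁, ha₁, b₁, hb₁, a₂, ha₂, b, hb, hab, hbx.trans hxa, h.lt_of_ne (hne ha₂).symm⟩

lemma nested_of_not_crosses {A B : Finset α} (hdisj : Disjoint A B) (hAB : ¬ Crosses A B)
    (hBA : ¬ Crosses B A) {x a₁ a₂ b₁ b₂ : α} (ha₁ : a₁ ∈ A) (ha₂ : a₂ ∈ A) (hb₁ : b₁ ∈ B)
    (hb₂ : b₂ ∈ B) (hax : a₁ < x) (hxa : x < a₂) (hbx : b₁ < x) (hxb : x < b₂) :
    (∀ b ∈ B, a₁ < b ∧ b < a₂) ∨ (∀ a ∈ A, b₁ < a ∧ a < b₂) := by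
  rcases lt_trichotomy a₁ b₁ with h | rfl | h
  · exact .inl fun _ => nested_of_not_crosses_of_lt hdisj hAB hBA ha₁ ha₂ hb₁ hxa hbx h
  · exact (disjoint_left.1 hdisj ha₁ hb₁).elim
  · exact .inr fun _ => nested_of_not_crosses_of_lt hdisj.symm hBA hAB hb₁ hb₂ ha₁ hxb hax h

/-- The classes `C i` are disjoint, and two of them cross only by means of points of the small
exceptional sets `H i`. A class consists of the sources of the paths ending in a given square, its
exceptional set of the sources of all paths visiting that square. -/
structure IsNearlyNoncrossing (ι : Finset κ) (C H : κ → Finset α) (D : ℕ) : Prop where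
  pairwiseDisjoint : (ι : Set κ).PairwiseDisjoint C
  not_crosses : ∀ i ∈ ι, ∀ j ∈ ι, i ≠ j → ¬ Crosses (C i \ H j) (C j \ H i)
  subset : ∀ i ∈ ι, C i ⊆ H i
  card_exceptional_le : ∀ i ∈ ι, #(H i) ≤ D

lemma IsNearlyNoncrossing.mono {ι ι' : Finset κ} {C H : κ → Finset α} {D : ℕ}
    (h : IsNearlyNoncrossing ι C H D) (hι : ι' ⊆ ι) : IsNearlyNoncrossing ι' C H D where
  pairwiseDisjoint := h.pairwiseDisjoint.subset (coe_subset.2 hι)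
  not_crosses i hi j hj := h.not_crosses i (hι hi) j (hι hj)
  subset i hi := h.subset i (hι hi)
  card_exceptional_le i hi := h.card_exceptional_le i (hι hi)

end LinearOrder

/-! ### Thinning out nearly non-crossing classes -/

/-- Three intervals, each given by its pair of endpoints, around the middle of a class `C` of at
least `8 * t` points. At least `t` points of `C` lie in `core`, on either side of it within
`nbhd`, and on either side of the interior of `outer`; and `nbhd` is at most half as long as
`outer`. -/
structure IsCentralBlock (C : Finset ℕ) (t : ℕ) (core nbhd outer : ℕ × ℕ) : Prop where
  core_card : t ≤ #{a ∈ C | core.1 ≤ a ∧ a ≤ core.2}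
  left_card : t ≤ #{a ∈ C | nbhd.1 ≤ a ∧ a < core.1}
  right_card : t ≤ #{a ∈ C | core.2 < a ∧ a ≤ nbhd.2}
  outer_left_card : t ≤ #{a ∈ C | a ≤ outer.1}
  outer_right_card : t ≤ #{a ∈ C | outer.2 ≤ a}
  outer_snd_mem : outer.2 ∈ C
  outer_lt : outer.1 < outer.2
  two_mul_nbhd_le : 2 * (nbhd.2 - nbhd.1) ≤ outer.2 - outer.1

lemma exists_isCentralBlock {C : Finset ℕ} {t : ℕ} (ht : 0 < t) (hC : 8 * t ≤ #C) :
    ∃ core nbhd outer, IsCentralBlock C t core nbhd outer := by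
  obtain ⟨e, he, heC⟩ := exists_strictMonoOn_image_range_eq C
  have hlt : ∀ {i j}, i < j → j < 8 * t → e i < e j := fun hij hj =>
    he (hij.trans (hj.trans_le hC)) (hj.trans_le hC) hij
  have hle : ∀ {i j}, i ≤ j → j < 8 * t → e i ≤ e j := fun hij hj =>
    (he.le_iff_le (hij.trans_lt (hj.trans_le hC)) (hj.trans_le hC)).2 hij
  have hblock : ∀ s, t ≤ s → s + 3 * t ≤ 7 * t →
      2 * (e (s + 3 * t - 1) - e s) ≤ e (7 * t - 1) - e t →
      IsCentralBlock C t (e (s + t), e (s + 2 * t - 1)) (e s, e (s + 3 * t - 1))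
        (e t, e (7 * t - 1)) := fun s _ hs' hlen =>
    { core_card := le_card_filter_of_enumeration he heC (i := s + t) (by omega) fun k hk hk' =>
        ⟨hle hk (by omega), hle (by omega) (by omega)⟩
      left_card := le_card_filter_of_enumeration he heC (i := s) (by omega) fun k hk hk' =>
        ⟨hle hk (by omega), hlt hk' (by omega)⟩
      right_card := le_card_filter_of_enumeration he heC (i := s + 2 * t) (by omega)
        fun k hk hk' => ⟨hlt (by omega) (by omega), hle (by omega) (by omega)⟩
      outer_left_card := le_card_filter_of_enumeration he heC (i := 0) (by omega)
        fun k _ hk => hle (by omega) (by omega)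
      outer_right_card := le_card_filter_of_enumeration he heC (i := 7 * t - 1) (by omega)
        fun k hk hk' => hle hk (by omega)
      outer_snd_mem := heC ▸ mem_image_of_mem e (mem_range.2 (by omega))
      outer_lt := hlt (by omega) (by omega)
      two_mul_nbhd_le := hlen }
  -- The candidate neighbourhoods `[e t, e (4t-1)]` and `[e (4t), e (7t-1)]` are disjoint parts of
  -- `outer`, so one of them has at most half its length.
  have h₁ : e t ≤ e (4 * t - 1) := hle (by omega) (by omega)
  have h₂ : e (4 * t - 1) < e (4 * t) := hlt (by omega) (by omega)
  have h₃ : e (4 * t) ≤ e (7 * t - 1) := hle (by omega) (by omega)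
  rcases le_total (2 * (e (4 * t - 1) - e t)) (e (7 * t - 1) - e t) with h | h
  · exact ⟨_, _, _, hblock t le_rfl (by omega) (by rwa [show t + 3 * t = 4 * t by ring])⟩
  · refine ⟨_, _, _, hblock (4 * t) (by omega) (by omega) ?_⟩
    rw [show 4 * t + 3 * t = 7 * t by ring]
    omega

lemma log_two_ne_log_two_of_two_mul_le {y z : ℕ} (hy : 0 < y) (h : 2 * y ≤ z) :
    Nat.log 2 y ≠ Nat.log 2 z := by
  have hlog := Nat.log_mono_right (b := 2) h
  rw [mul_comm, Nat.log_mul_base one_lt_two hy.ne'] at hlog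
  omega

lemma IsCentralBlock.log_length_ne {A B E F : Finset ℕ} {t x : ℕ}
    {coreA nbhdA outerA coreB nbhdB outerB : ℕ × ℕ} (hA : IsCentralBlock A t coreA nbhdA outerA)
    (hB : IsCentralBlock B t coreB nbhdB outerB) (hdisj : Disjoint A B)
    (hAB : ¬ Crosses (A \ F) (B \ E)) (hBA : ¬ Crosses (B \ E) (A \ F))
    (hF : #(A ∩ F) < t) (hE : #(B ∩ E) < t) (hxA : coreA.1 ≤ x ∧ x ≤ coreA.2)
    (hxB : coreB.1 ≤ x ∧ x ≤ coreB.2) :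
    Nat.log 2 (outerA.2 - outerA.1) ≠ Nat.log 2 (outerB.2 - outerB.1) := by
  obtain ⟨a₁, ha₁, hna₁, ha₁x⟩ := exists_mem_sdiff_of_card_inter_lt hF hA.left_card
  obtain ⟨a₂, ha₂, hxa₂, hna₂⟩ := exists_mem_sdiff_of_card_inter_lt hF hA.right_card
  obtain ⟨b₁, hb₁, hnb₁, hb₁x⟩ := exists_mem_sdiff_of_card_inter_lt hE hB.left_card
  obtain ⟨b₂, hb₂, hxb₂, hnb₂⟩ := exists_mem_sdiff_of_card_inter_lt hE hB.right_card
  rcases nested_of_not_crosses (hdisj.mono sdiff_subset sdiff_subset) hAB hBA ha₁ ha₂ hb₁ hb₂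
    (ha₁x.trans_le hxA.1) (hxA.2.trans_lt hxa₂) (hb₁x.trans_le hxB.1) (hxB.2.trans_lt hxb₂)
    with hnest | hnest
  · obtain ⟨b₀, hb₀, hb₀o⟩ := exists_mem_sdiff_of_card_inter_lt hE hB.outer_left_card
    obtain ⟨b₃, hb₃, hb₃o⟩ := exists_mem_sdiff_of_card_inter_lt hE hB.outer_right_card
    have := hA.two_mul_nbhd_le
    have := hnest b₀ hb₀
    have := hnest b₃ hb₃
    exact (log_two_ne_log_two_of_two_mul_le (Nat.sub_pos_of_lt hB.outer_lt) (by omega)).symm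
  · obtain ⟨a₀, ha₀, ha₀o⟩ := exists_mem_sdiff_of_card_inter_lt hF hA.outer_left_card
    obtain ⟨a₃, ha₃, ha₃o⟩ := exists_mem_sdiff_of_card_inter_lt hF hA.outer_right_card
    have := hB.two_mul_nbhd_le
    have := hnest a₀ ha₀
    have := hnest a₃ ha₃
    exact log_two_ne_log_two_of_two_mul_le (Nat.sub_pos_of_lt hA.outer_lt) (by omega)

lemma mem_of_mem_biUnion_of_mem [DecidableEq α] {ι G : Finset κ} {C T : κ → Finset α}
    (hdisj : (ι : Set κ).PairwiseDisjoint C) (hG : G ⊆ ι) (hT : ∀ j ∈ G, T j ⊆ C j) {i : κ}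
    (hi : i ∈ ι) {x : α} (hx : x ∈ G.biUnion T) (hxi : x ∈ C i) : i ∈ G ∧ x ∈ T i := by
  obtain ⟨j, hj, hxj⟩ := mem_biUnion.1 hx
  obtain rfl := hdisj.elim_finset hi (hG hj) x hxi (hT j hj hxj)
  exact ⟨hj, hxj⟩

namespace IsNearlyNoncrossing

variable {ι : Finset κ} {C H : κ → Finset ℕ} {D lam : ℕ}

lemma card_filter_mem_core_le (hCH : IsNearlyNoncrossing ι C H D)
    (hlam : ∀ i ∈ ι, ∀ a ∈ C i, a < 2 ^ lam) {t : ℕ} (ht : 0 < t) {core nbhd outer : κ → ℕ × ℕ}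
    (hblock : ∀ i ∈ ι, IsCentralBlock (C i) t (core i) (nbhd i) (outer i)) (x : ℕ) :
    #{i ∈ ι | (core i).1 ≤ x ∧ x ≤ (core i).2} ≤ lam * (2 * (D / t) + 1) := by
  classical
  have hlog : ∀ i ∈ {i ∈ ι | (core i).1 ≤ x ∧ x ≤ (core i).2},
      Nat.log 2 ((outer i).2 - (outer i).1) ∈ range lam := fun i hi => by
    have hi := (mem_filter.1 hi).1
    have houter := (hblock i hi).outer_lt
    have := hlam i hi _ (hblock i hi).outer_snd_mem
    exact mem_range.2 (Nat.log_lt_of_lt_pow (by omega) (by omega))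
  rw [mul_comm]
  refine (card_le_mul_card_image_of_maps_to hlog _ fun k _ => ?_).trans_eq (by rw [card_range])
  refine card_le_of_inDegree_le_of_total _ (fun i j => t ≤ #(C i ∩ H j)) _ (fun j hj => ?_) ?_
  · have hj : j ∈ ι := (mem_filter.1 (mem_filter.1 hj).1).1
    calc _ ≤ #{i ∈ ι | t ≤ #(C i ∩ H j)} := card_le_card <| filter_subset_filter _ <|
          (filter_subset _ _).trans (filter_subset _ _)
      _ ≤ #(H j) / t := card_filter_le_card_inter_le hCH.pairwiseDisjoint _ ht
      _ ≤ D / t := Nat.div_le_div_right (hCH.card_exceptional_le j hj)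
  · intro i hi j hj hij
    rw [mem_filter, mem_filter] at hi hj
    obtain ⟨⟨hi, hix⟩, hik⟩ := hi
    obtain ⟨⟨hj, hjx⟩, hjk⟩ := hj
    by_contra! hsmall
    exact (hblock i hi).log_length_ne (hblock j hj) (hCH.pairwiseDisjoint hi hj hij)
      (hCH.not_crosses i hi j hj hij) (hCH.not_crosses j hj i hi hij.symm) hsmall.1 hsmall.2
      hix hjx (hik.trans hjk.symm)

lemma card_le (hCH : IsNearlyNoncrossing ι C H D) {i : κ} (hi : i ∈ ι) : #(C i) ≤ D :=
  (card_le_card (hCH.subset i hi)).trans (hCH.card_exceptional_le i hi)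

lemma sum_card_core_le (hCH : IsNearlyNoncrossing ι C H D)
    (hlam : ∀ i ∈ ι, ∀ a ∈ C i, a < 2 ^ lam) {t : ℕ} (ht : 0 < t)
    (hcard : ∀ i ∈ ι, #(C i) ≤ 16 * t) {core nbhd outer : κ → ℕ × ℕ}
    (hblock : ∀ i ∈ ι, IsCentralBlock (C i) t (core i) (nbhd i) (outer i)) :
    ∑ i ∈ ι, #{x ∈ ι.biUnion C | (core i).1 ≤ x ∧ x ≤ (core i).2} ≤ #ι * (48 * lam * D) := by
  have htD : ∀ i ∈ ι, t ≤ D := fun i hi =>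
    ((hblock i hi).core_card.trans (card_filter_le _ _)).trans (hCH.card_le hi)
  have hdiv := Nat.mul_div_le D t
  calc ∑ i ∈ ι, #{x ∈ ι.biUnion C | (core i).1 ≤ x ∧ x ≤ (core i).2}
      = ∑ x ∈ ι.biUnion C, #{i ∈ ι | (core i).1 ≤ x ∧ x ≤ (core i).2} :=
        sum_card_bipartiteAbove_eq_sum_card_bipartiteBelow
          (fun i x => (core i).1 ≤ x ∧ x ≤ (core i).2)
    _ ≤ #(ι.biUnion C) * (lam * (2 * (D / t) + 1)) := by
        simpa only [smul_eq_mul] using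
          sum_le_card_nsmul _ _ _ fun x _ => hCH.card_filter_mem_core_le hlam ht hblock x
    _ ≤ #ι * (16 * t) * (lam * (2 * (D / t) + 1)) := by
        gcongr; exact card_biUnion_le_card_mul _ _ _ hcard
    _ = #ι * (16 * lam * (2 * (t * (D / t)) + t)) := by ring
    _ ≤ #ι * (48 * lam * D) := by
        rcases ι.eq_empty_or_nonempty with rfl | ⟨i, hi⟩
        · simp
        calc #ι * (16 * lam * (2 * (t * (D / t)) + t)) ≤ #ι * (16 * lam * (2 * D + D)) := by
              gcongr; exact htD i hi
          _ = #ι * (48 * lam * D) := by ring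

lemma exists_sparse_subset_of_large (hCH : IsNearlyNoncrossing ι C H D)
    (hlam : ∀ i ∈ ι, ∀ a ∈ C i, a < 2 ^ lam) {t : ℕ} (ht : 0 < t)
    (hlower : ∀ i ∈ ι, 8 * t ≤ #(C i)) (hupper : ∀ i ∈ ι, #(C i) ≤ 16 * t) :
    ∃ S' ⊆ ι.biUnion C, #(ι.biUnion C) ≤ 32 * #S' ∧
      ∀ i ∈ ι, #(pointsBetween S' (S' ∩ C i)) ≤ 96 * lam * D := by
  choose! core nbhd outer hblock using fun i hi => exists_isCentralBlock ht (hlower i hi)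
  set w : κ → ℕ := fun i => #{x ∈ ι.biUnion C | (core i).1 ≤ x ∧ x ≤ (core i).2}
  set G := {i ∈ ι | w i ≤ 2 * (48 * lam * D)}
  set T : κ → Finset ℕ := fun i => {x ∈ C i | (core i).1 ≤ x ∧ x ≤ (core i).2}
  have hTC : ∀ i, T i ⊆ C i := fun i => filter_subset _ _
  have hGι : G ⊆ ι := filter_subset _ _
  have hS' : G.biUnion T ⊆ ι.biUnion C := biUnion_subset.2 fun i hi =>
    (hTC i).trans (subset_biUnion_of_mem C (hGι hi))
  refine ⟨G.biUnion T, hS', ?_, fun i hi => ?_⟩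
  · have hG : #ι ≤ 2 * #G :=
      card_le_two_mul_card_filter_le_of_sum_le (hCH.sum_card_core_le hlam ht hupper hblock)
    have hT : #G * t ≤ #(G.biUnion T) := by
      rw [card_biUnion fun i hi j hj hij => (hCH.pairwiseDisjoint (hGι hi) (hGι hj) hij).mono
        (hTC i) (hTC j)]
      simpa only [smul_eq_mul] using
        card_nsmul_le_sum G (fun i => #(T i)) t fun i hi => (hblock i (hGι hi)).core_card
    calc #(ι.biUnion C) ≤ #ι * (16 * t) := card_biUnion_le_card_mul _ _ _ hupper
      _ ≤ 2 * #G * (16 * t) := by gcongr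
      _ = 32 * (#G * t) := by ring
      _ ≤ 32 * #(G.biUnion T) := by gcongr
  · have hmem : ∀ x ∈ G.biUnion T ∩ C i, i ∈ G ∧ x ∈ T i := fun x hx =>
      mem_of_mem_biUnion_of_mem hCH.pairwiseDisjoint hGι (fun j _ => hTC j) hi
        (mem_inter.1 hx).1 (mem_inter.1 hx).2
    rcases (G.biUnion T ∩ C i).eq_empty_or_nonempty with hempty | ⟨y, hy⟩
    · simp [hempty, pointsBetween_empty]
    calc #(pointsBetween (G.biUnion T) (G.biUnion T ∩ C i))
        ≤ #{x ∈ G.biUnion T | (core i).1 ≤ x ∧ x ≤ (core i).2} :=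
          card_le_card <| pointsBetween_subset_filter fun x hx =>
            (mem_filter.1 (hmem x hx).2).2
      _ ≤ w i := card_le_card (filter_subset_filter _ hS')
      _ ≤ 2 * (48 * lam * D) := (mem_filter.1 (hmem y hy).1).2
      _ = 96 * lam * D := by ring

lemma exists_sparse_subset_of_small (hCH : IsNearlyNoncrossing ι C H D) {k : ℕ}
    (hcard : ∀ i ∈ ι, #(C i) ≤ k) :
    ∃ S' ⊆ ι.biUnion C, #(ι.biUnion C) ≤ k * #S' ∧
      ∀ i ∈ ι, #(pointsBetween S' (S' ∩ C i)) ≤ D := by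
  have hrep : ∀ i ∈ ι, ∃ T ⊆ C i, #T ≤ 1 ∧ #(C i) ≤ k * #T := fun i hi => by
    rcases (C i).eq_empty_or_nonempty with hempty | ⟨a, ha⟩
    · exact ⟨∅, empty_subset _, by simp, by simp [hempty]⟩
    · exact ⟨{a}, singleton_subset_iff.2 ha, by simp, by simpa using hcard i hi⟩
  choose! T hTC hT hTcard using hrep
  refine ⟨ι.biUnion T, biUnion_mono hTC,
    card_biUnion_le_mul_of_subset hCH.pairwiseDisjoint hTC hTcard, fun i hi => ?_⟩
  have hsub : ι.biUnion T ∩ C i ⊆ T i := fun x hx =>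
    (mem_of_mem_biUnion_of_mem hCH.pairwiseDisjoint Subset.rfl hTC hi
      (mem_inter.1 hx).1 (mem_inter.1 hx).2).2
  calc _ ≤ #(ι.biUnion T ∩ C i) := card_le_card <|
        pointsBetween_subset_of_card_le_one ((card_le_card hsub).trans (hT i hi))
    _ ≤ #(C i) := card_le_card inter_subset_right
    _ ≤ D := hCH.card_le hi

lemma exists_sparse_subset_of_log_card_eq (hCH : IsNearlyNoncrossing ι C H D) (hlam₀ : 0 < lam)
    (hlam : ∀ i ∈ ι, ∀ a ∈ C i, a < 2 ^ lam) {e : ℕ} (he : ∀ i ∈ ι, Nat.log 2 #(C i) = e) :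
    ∃ S' ⊆ ι.biUnion C, #(ι.biUnion C) ≤ 32 * #S' ∧
      ∀ i ∈ ι, #(pointsBetween S' (S' ∩ C i)) ≤ 96 * lam * D := by
  have hupper : ∀ i ∈ ι, #(C i) ≤ 2 ^ (e + 1) := fun i hi =>
    he i hi ▸ (Nat.lt_pow_succ_log_self one_lt_two _).le
  rcases lt_or_ge e 3 with he₃ | he₃
  · obtain ⟨S', hS', hcard, hsparse⟩ := hCH.exists_sparse_subset_of_small hupper
    refine ⟨S', hS', hcard.trans ?_, fun i hi => (hsparse i hi).trans ?_⟩
    · gcongr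
      exact (Nat.pow_le_pow_right two_pos (by omega : e + 1 ≤ 5))
    · exact Nat.le_mul_of_pos_left D (by positivity)
  · obtain ⟨f, rfl⟩ := Nat.exists_eq_add_of_le he₃
    refine hCH.exists_sparse_subset_of_large hlam (pow_pos two_pos f) (fun i hi => ?_)
      fun i hi => (hupper i hi).trans_eq (by ring)
    have hlog := he i hi
    have hne : #(C i) ≠ 0 := fun h => by simp [h] at hlog; omega
    calc 8 * 2 ^ f = 2 ^ (3 + f) := by ring
      _ ≤ #(C i) := hlog ▸ Nat.pow_log_le_self 2 hne

/-- The classes of the dominant size `2 ^ e ≤ #(C i) < 2 ^ (e + 1)` are thinned out, the others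
discarded. -/
lemma exists_sparse_subset (hCH : IsNearlyNoncrossing ι C H D) (hlam₀ : 0 < lam)
    (hlam : ∀ i ∈ ι, ∀ a ∈ C i, a < 2 ^ lam) :
    ∃ S' ⊆ ι.biUnion C, #(ι.biUnion C) ≤ 32 * (lam + 1) * #S' ∧
      ∀ i ∈ ι, #(pointsBetween S' (S' ∩ C i)) ≤ 96 * lam * D := by
  have hlog : ∀ i ∈ ι, Nat.log 2 #(C i) ∈ range (lam + 1) := fun i hi => by
    have hsub : C i ⊆ range (2 ^ lam) := fun a ha => mem_range.2 (hlam i hi a ha)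
    have := Nat.log_mono_right (b := 2) ((card_le_card hsub).trans_eq (card_range _))
    rw [Nat.log_pow one_lt_two] at this
    exact mem_range_succ_iff.2 this
  obtain ⟨e, -, he⟩ := exists_card_biUnion_le_card_mul ι C nonempty_range_add_one hlog
  set ι' := {i ∈ ι | Nat.log 2 #(C i) = e}
  have hι' : ι' ⊆ ι := filter_subset _ _
  obtain ⟨S', hS', hcard, hsparse⟩ := (hCH.mono hι').exists_sparse_subset_of_log_card_eq hlam₀
    (fun i hi => hlam i (hι' hi)) fun i hi => (mem_filter.1 hi).2
  refine ⟨S', hS'.trans (biUnion_subset_biUnion_of_subset_left C hι'), ?_, fun i hi => ?_⟩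
  · calc #(ι.biUnion C) ≤ (lam + 1) * #(ι'.biUnion C) := by simpa only [card_range] using he
      _ ≤ (lam + 1) * (32 * #S') := by gcongr
      _ = 32 * (lam + 1) * #S' := by ring
  by_cases hiι' : i ∈ ι'
  · exact hsparse i hiι'
  · have hempty : S' ∩ C i = ∅ := eq_empty_of_forall_notMem fun x hx => hiι'
      (mem_of_mem_biUnion_of_mem hCH.pairwiseDisjoint hι' (fun _ _ => Subset.rfl) hi
        (hS' (mem_inter.1 hx).1) (mem_inter.1 hx).2).1
    simp [hempty, pointsBetween_empty]

end IsNearlyNoncrossing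

end Combinatorics

lemma gridG_adj {ℓ : ℕ} {u v : Vtx} : (gridG ℓ).Adj u v ↔
    (1 ≤ u.1 ∧ u.1 ≤ ℓ ∧ 1 ≤ u.2 ∧ u.2 ≤ ℓ ∧ 1 ≤ v.1 ∧ v.1 ≤ ℓ ∧ 1 ≤ v.2 ∧ v.2 ≤ ℓ) ∧
      ((u.1 = v.1 ∧ (u.2 + 1 = v.2 ∨ v.2 + 1 = u.2)) ∨
        (u.2 = v.2 ∧ (u.1 + 1 = v.1 ∨ v.1 + 1 = u.1))) := by
  rw [gridG, rectGrid, SimpleGraph.fromRel_adj]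
  constructor
  · rintro ⟨-, h | h⟩ <;> omega
  · intro h
    refine ⟨?_, by omega⟩
    rintro rfl
    omega

/-! ### Planarity of the grid -/

section Planarity

/-- The signed number of times the step `p → q` crosses the ray that starts just below the vertex
`u` and runs to the left. Horizontal steps never cross it, and a vertical one does if exactly one
of its ends lies in the quarter plane below the ray. -/
def crossStep (p q u : Vtx) : ℤ :=
  if p.2 = q.2 then
    (if u.1 < q.1 ∧ q.2 ≤ u.2 then 1 else 0) - (if u.1 < p.1 ∧ p.2 ≤ u.2 then 1 else 0)
  else 0

/-- The signed number of times a walk crosses the ray that starts just below `u` and runs to the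
left. -/
def crossNum {G : SimpleGraph Vtx} {x y : Vtx} (W : G.Walk x y) (u : Vtx) : ℤ :=
  (W.darts.map fun e => crossStep e.fst e.snd u).sum

lemma sum_darts_sub {V A : Type*} [AddCommGroup A] {G : SimpleGraph V} (g : V → A) {x y : V}
    (W : G.Walk x y) : (W.darts.map fun e => g e.snd - g e.fst).sum = g y - g x := by
  induction W with
  | nil => simp
  | cons _ W ih => simp [ih]

variable {ℓ : ℕ} {x y : Vtx}

lemma crossNum_succ_col (W : (gridG ℓ).Walk x y) {r b : ℕ} (h : (r, b + 1) ∉ W.support) :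
    crossNum W (r, b + 1) = crossNum W (r, b) := by
  refine congrArg List.sum (List.map_congr_left fun e he => ?_)
  have hadj := (gridG_adj.1 e.adj).2
  have hfst : (r, b + 1) ≠ e.fst := fun h' => h (h' ▸ W.dart_fst_mem_support_of_mem_darts he)
  have hsnd : (r, b + 1) ≠ e.snd := fun h' => h (h' ▸ W.dart_snd_mem_support_of_mem_darts he)
  rw [ne_eq, Prod.ext_iff] at hfst hsnd
  unfold crossStep
  dsimp only at hfst hsnd ⊢
  split_ifs <;> omega

/-- Conservation of flow in the part of row `r + 1` up to column `b`. -/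
lemma crossNum_sub_crossNum_succ_row (W : (gridG ℓ).Walk x y) {r b : ℕ}
    (h : (r + 1, b) ∉ W.support) :
    crossNum W (r, b) - crossNum W (r + 1, b) =
      (if y.1 = r + 1 ∧ y.2 ≤ b then 1 else 0) - (if x.1 = r + 1 ∧ x.2 ≤ b then 1 else 0) := by
  rw [sub_eq_iff_eq_add, crossNum, crossNum,
    ← sum_darts_sub (fun p : Vtx => if p.1 = r + 1 ∧ p.2 ≤ b then (1 : ℤ) else 0) W,
    ← List.sum_map_add]
  refine congrArg List.sum (List.map_congr_left fun e he => ?_)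
  have hadj := (gridG_adj.1 e.adj).2
  have hfst : (r + 1, b) ≠ e.fst := fun h' => h (h' ▸ W.dart_fst_mem_support_of_mem_darts he)
  have hsnd : (r + 1, b) ≠ e.snd := fun h' => h (h' ▸ W.dart_snd_mem_support_of_mem_darts he)
  rw [ne_eq, Prod.ext_iff] at hfst hsnd
  unfold crossStep
  dsimp only at hfst hsnd ⊢
  split_ifs <;> omega

lemma crossNum_row_zero (W : (gridG ℓ).Walk x y) (b : ℕ) : crossNum W (0, b) = 0 := by
  refine List.sum_eq_zero fun n hn => ?_
  obtain ⟨e, -, rfl⟩ := List.mem_map.1 hn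
  have hadj := gridG_adj.1 e.adj
  unfold crossStep
  split_ifs <;> omega

lemma crossNum_top_row (W : (gridG ℓ).Walk x y) (hx : x.1 = 1) (hy : y.1 = 1) {b : ℕ}
    (h : (1, b) ∉ W.support) :
    crossNum W (1, b) = (if x.2 ≤ b then 1 else 0) - (if y.2 ≤ b then 1 else 0) := by
  have hflow := crossNum_sub_crossNum_succ_row W (r := 0) h
  rw [crossNum_row_zero] at hflow
  simp only [hx, hy, zero_add, true_and] at hflow
  linarith

lemma crossNum_eq_of_adj (W : (gridG ℓ).Walk x y) (hx : x.1 = 1) (hy : y.1 = 1) {u v : Vtx}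
    (huv : (gridG ℓ).Adj u v) (hu : u ∉ W.support) (hv : v ∉ W.support) :
    crossNum W u = crossNum W v := by
  have hrow : ∀ {r b}, 1 ≤ r → (r + 1, b) ∉ W.support →
      crossNum W (r, b) = crossNum W (r + 1, b) := fun hr h => by
    have hflow := crossNum_sub_crossNum_succ_row W h
    rw [if_neg (by omega), if_neg (by omega)] at hflow
    linarith
  obtain ⟨u₁, u₂⟩ := u
  obtain ⟨v₁, v₂⟩ := v
  rw [gridG_adj] at huv
  dsimp only at huv
  obtain ⟨⟨hu₁, -, -, -, hv₁, -⟩, ⟨rfl, rfl | rfl⟩ | ⟨rfl, rfl | rfl⟩⟩ := huv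
  · exact (crossNum_succ_col W hv).symm
  · exact crossNum_succ_col W hu
  · exact hrow hu₁ hv
  · exact (hrow hv₁ hu).symm

lemma crossNum_eq_of_disjoint (W : (gridG ℓ).Walk x y) (hx : x.1 = 1) (hy : y.1 = 1) {u v : Vtx}
    (P : (gridG ℓ).Walk u v) (h : ∀ z ∈ P.support, z ∉ W.support) :
    crossNum W u = crossNum W v := by
  induction P with
  | nil => rfl
  | cons hadj P ih =>
    simp only [SimpleGraph.Walk.support_cons, List.mem_cons, forall_eq_or_imp] at h
    exact (crossNum_eq_of_adj W hx hy hadj h.1 (h.2 _ P.start_mem_support)).trans (ih h.2)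

/-- Otherwise the crossing numbers of `W` at `u` and `v` would agree, but they are `1` and `0`. -/
lemma exists_mem_support_of_interleaved {u v : Vtx} (hx : x.1 = 1) (hy : y.1 = 1) (hu : u.1 = 1)
    (hv : v.1 = 1) (hxu : x.2 < u.2) (huy : u.2 < y.2) (hyv : y.2 < v.2)
    (W : (gridG ℓ).Walk x y) (P : (gridG ℓ).Walk u v) : ∃ z ∈ W.support, z ∈ P.support := by
  by_contra! hdisj
  have hPW : ∀ z ∈ P.support, z ∉ W.support := fun z hP hW => hdisj z hW hP
  obtain ⟨_, b₁⟩ := u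
  obtain ⟨_, b₂⟩ := v
  obtain rfl := hu
  obtain rfl := hv
  have heq := crossNum_eq_of_disjoint W hx hy P hPW
  rw [crossNum_top_row W hx hy (hPW _ P.start_mem_support),
    crossNum_top_row W hx hy (hPW _ P.end_mem_support)] at heq
  dsimp only at *
  split_ifs at heq <;> omega

end Planarity

/-! ### Walks and squares -/

lemma exists_walk_of_adj_succ {V : Type*} {G : SimpleGraph V} (f : ℕ → V) {a b : ℕ} (hab : a ≤ b)
    (hadj : ∀ k, a ≤ k → k < b → G.Adj (f k) (f (k + 1))) :
    ∃ W : G.Walk (f a) (f b), ∀ z ∈ W.support, ∃ k, a ≤ k ∧ k ≤ b ∧ f k = z := by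
  induction b, hab using Nat.le_induction with
  | base => exact ⟨.nil, fun z hz => ⟨a, le_rfl, le_rfl, by simpa [eq_comm] using hz⟩⟩
  | succ b hab ih =>
    obtain ⟨W, hW⟩ := ih fun k hk hkb => hadj k hk (by omega)
    refine ⟨W.concat (hadj b hab b.lt_succ_self), fun z hz => ?_⟩
    rw [SimpleGraph.Walk.support_concat, List.mem_append, List.mem_singleton] at hz
    rcases hz with hz | rfl
    · obtain ⟨k, hk, hkb, rfl⟩ := hW z hz
      exact ⟨k, hk, by omega, rfl⟩
    · exact ⟨b + 1, by omega, le_rfl, rfl⟩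

lemma exists_walk_from_corner {ℓ r r' c c' : ℕ} (hr : 1 ≤ r) (hr' : r' ≤ ℓ) (hc : 1 ≤ c)
    (hc' : c' ≤ ℓ) {u : Vtx} (hu : memSquare u (Icc r r', Icc c c')) :
    ∃ W : (gridG ℓ).Walk (r, c) u, ∀ z ∈ W.support, memSquare z (Icc r r', Icc c c') := by
  obtain ⟨u₁, u₂⟩ := u
  simp only [memSquare, mem_Icc] at hu ⊢
  obtain ⟨W₁, hW₁⟩ := exists_walk_of_adj_succ (G := gridG ℓ) (fun k => (r, k)) hu.2.1
    fun k _ _ => gridG_adj.2 (by dsimp only; omega)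
  obtain ⟨W₂, hW₂⟩ := exists_walk_of_adj_succ (G := gridG ℓ) (fun k => (k, u₂)) hu.1.1
    fun k _ _ => gridG_adj.2 (by dsimp only; omega)
  refine ⟨W₁.append W₂, fun z hz => ?_⟩
  rcases (SimpleGraph.Walk.mem_support_append_iff _ _).1 hz with hz | hz
  · obtain ⟨k, hk, hk', rfl⟩ := hW₁ z hz
    dsimp only; omega
  · obtain ⟨k, hk, hk', rfl⟩ := hW₂ z hz
    dsimp only; omega

lemma exists_walk_in_square {ℓ : ℕ} {Q : SquareSpec} (h₁ : IsIntervalIn ℓ Q.1)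
    (h₂ : IsIntervalIn ℓ Q.2) {u v : Vtx} (hu : memSquare u Q) (hv : memSquare v Q) :
    ∃ W : (gridG ℓ).Walk u v, ∀ z ∈ W.support, memSquare z Q := by
  obtain ⟨_, _⟩ := Q
  obtain ⟨r, r', hr, -, hr', rfl⟩ := h₁
  obtain ⟨c, c', hc, -, hc', rfl⟩ := h₂
  obtain ⟨W₁, hW₁⟩ := exists_walk_from_corner hr hr' hc hc' hu
  obtain ⟨W₂, hW₂⟩ := exists_walk_from_corner hr hr' hc hc' hv
  refine ⟨W₁.reverse.append W₂, fun z hz => ?_⟩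
  rw [SimpleGraph.Walk.mem_support_append_iff, SimpleGraph.Walk.support_reverse,
    List.mem_reverse] at hz
  exact hz.elim (hW₁ z) (hW₂ z)

/-- The outermost rows `r`, `r'` and columns `c`, `c'` of the sub-grid on rows `r..r'` and columns
`c..c'`. -/
def frame (r r' c c' : ℕ) : Finset Vtx := {r, r'} ×ˢ Icc c c' ∪ Icc r r' ×ˢ {c, c'}

lemma card_frame_le (r r' c c' : ℕ) : #(frame r r' c c') ≤ 2 * (#(Icc r r') + #(Icc c c')) :=
  calc #(frame r r' c c') ≤ #{r, r'} * #(Icc c c') + #(Icc r r') * #{c, c'} := by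
        rw [← card_product, ← card_product]; exact card_union_le _ _
    _ ≤ 2 * #(Icc c c') + #(Icc r r') * 2 := by gcongr <;> exact card_le_two
    _ = 2 * (#(Icc r r') + #(Icc c c')) := by ring

lemma exists_mem_frame_of_enters {ℓ r r' c c' : ℕ} {x y : Vtx} (W : (gridG ℓ).Walk x y)
    (hx : ¬ memSquare x (Icc r r', Icc c c'))
    (hW : ∃ z ∈ W.support, memSquare z (Icc r r', Icc c c')) :
    ∃ z ∈ W.support, z ∈ frame r r' c c' := by
  obtain ⟨z, hz, hzQ⟩ := hW
  obtain ⟨e, he, hfst, hsnd⟩ := (W.takeUntil z hz).exists_boundary_dart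
    {w | ¬ memSquare w (Icc r r', Icc c c')} hx (not_not.2 hzQ)
  refine ⟨e.snd, W.support_takeUntil_subset_support hz
    ((W.takeUntil z hz).dart_snd_mem_support_of_mem_darts he), ?_⟩
  have hadj := (gridG_adj.1 e.adj).2
  simp only [memSquare, Set.mem_ofPred_eq, not_not, mem_Icc] at hfst hsnd
  simp only [frame, mem_union, mem_product, mem_insert, mem_singleton, mem_Icc]
  omega

/-! ### One level of the hierarchy -/

section OneLevel

lemma NodeDisjointRoutable.mono {V : Type*} {G : SimpleGraph V} {M M' : Finset (V × V)}
    (hM : NodeDisjointRoutable G M) (hM' : M' ⊆ M) : NodeDisjointRoutable G M' := by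
  obtain ⟨P, hP, hdisj⟩ := hM
  exact ⟨fun m => P ⟨m, hM' m.2⟩, fun m => hP _, fun m m' hne => hdisj _ _ fun h =>
    hne (Subtype.ext (Subtype.mk.inj h))⟩

lemma NodeDisjointRoutable.exists_walks {V : Type*} {G : SimpleGraph V} {M : Finset (V × V)}
    (hM : NodeDisjointRoutable G M) : ∃ P : ∀ m : {m // m ∈ M}, G.Walk m.1.1 m.1.2,
      ∀ m m' z, z ∈ (P m).support → z ∈ (P m').support → m = m' := by
  obtain ⟨P, -, hdisj⟩ := hM
  exact ⟨P, fun m m' z hz hz' => by_contra fun hne => hdisj m m' hne z hz hz'⟩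

lemma NodeDisjointRoutable.injOn_source_col {ℓ : ℕ} {M : Finset DPair}
    (hM : NodeDisjointRoutable (gridG ℓ) M) (hsrc : ∀ m ∈ M, m.1.1 = 1) :
    Set.InjOn (fun m : DPair => m.1.2) M := by
  obtain ⟨P, hP⟩ := hM.exists_walks
  intro m hm m' hm' hcol
  have hsource : m.1 = m'.1 := Prod.ext ((hsrc m hm).trans (hsrc m' hm').symm) hcol
  exact congrArg Subtype.val <| hP ⟨m, hm⟩ ⟨m', hm'⟩ m.1 (P ⟨m, hm⟩).start_mem_support
    (by rw [hsource]; exact (P ⟨m', hm'⟩).start_mem_support)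

section Canonical

variable {ℓ d : ℕ}

lemma IsCanonicalIntervals.eq_of_mem {Is : Finset (Finset ℕ)} (hIs : IsCanonicalIntervals ℓ d Is)
    {I J : Finset ℕ} (hI : I ∈ Is) (hJ : J ∈ Is) {i : ℕ} (hiI : i ∈ I) (hiJ : i ∈ J) : I = J := by
  by_contra hne
  have hsep := hIs.2 I hI J hJ hne i hiI i hiJ
  rw [sub_self, abs_zero] at hsep
  omega

variable {Qs : Finset SquareSpec} {Q Q' : SquareSpec}

lemma IsCanonicalSquares.eq_of_memSquare (hQs : IsCanonicalSquares ℓ d Qs) (hQ : Q ∈ Qs)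
    (hQ' : Q' ∈ Qs) {z : Vtx} (hz : memSquare z Q) (hz' : memSquare z Q') : Q = Q' := by
  obtain ⟨I₁, I₂, h₁, h₂, rfl⟩ := hQs
  rw [mem_product] at hQ hQ'
  exact Prod.ext (h₁.eq_of_mem hQ.1 hQ'.1 hz.1 hz'.1) (h₂.eq_of_mem hQ.2 hQ'.2 hz.2 hz'.2)

lemma IsCanonicalSquares.isIntervalIn (hQs : IsCanonicalSquares ℓ d Qs) (hQ : Q ∈ Qs) :
    IsIntervalIn ℓ Q.1 ∧ IsIntervalIn ℓ Q.2 := by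
  obtain ⟨I₁, I₂, h₁, h₂, rfl⟩ := hQs
  exact ⟨(h₁.1 _ (mem_product.1 hQ).1).1, (h₂.1 _ (mem_product.1 hQ).2).1⟩

lemma IsCanonicalSquares.card_eq (hQs : IsCanonicalSquares ℓ d Qs) (hQ : Q ∈ Qs) :
    #Q.1 = d ∧ #Q.2 = d := by
  obtain ⟨I₁, I₂, h₁, h₂, rfl⟩ := hQs
  exact ⟨(h₁.1 _ (mem_product.1 hQ).1).2, (h₂.1 _ (mem_product.1 hQ).2).2⟩

lemma IsCanonicalSquares.le (hQs : IsCanonicalSquares ℓ d Qs) (hQ : Q ∈ Qs) : d ≤ ℓ := by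
  obtain ⟨a, b, ha, -, hb, hIcc⟩ := (hQs.isIntervalIn hQ).1
  rw [← (hQs.card_eq hQ).1, hIcc, Nat.card_Icc]
  omega

end Canonical

/-- The columns of the sources of the demand pairs in `M`. The sources of the pairs considered
here lie on the top row, so a source is determined by its column. -/
def sourceCols (M : Finset DPair) : Finset ℕ := M.image fun m => m.1.2

/-- The columns of the sources of the demand pairs in `M` whose destination lies in `Q`. -/
def colsEndingIn (M : Finset DPair) (Q : SquareSpec) : Finset ℕ :=
  sourceCols {m ∈ M | memSquare m.2 Q}

/-- The columns of the sources of the walks `P m` that visit the square `Q`. -/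
def colsVisiting {G : SimpleGraph Vtx} {M : Finset DPair}
    (P : ∀ m : {m // m ∈ M}, G.Walk m.1.1 m.1.2) (Q : SquareSpec) : Finset ℕ :=
  ({m : {m // m ∈ M} | ∃ z ∈ (P m).support, memSquare z Q} : Finset _).image fun m => m.1.1.2

lemma mem_colsEndingIn {M : Finset DPair} {Q : SquareSpec} {a : ℕ} :
    a ∈ colsEndingIn M Q ↔ ∃ m : {m // m ∈ M}, memSquare m.1.2 Q ∧ m.1.1.2 = a := by
  simp only [colsEndingIn, sourceCols, mem_image, mem_filter, Subtype.exists, exists_prop,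
    and_assoc]

lemma colsEndingIn_subset {M : Finset DPair} (Q : SquareSpec) : colsEndingIn M Q ⊆ sourceCols M :=
  image_subset_image (filter_subset _ _)

lemma colsEndingIn_mono {M M' : Finset DPair} (hM' : M' ⊆ M) (Q : SquareSpec) :
    colsEndingIn M' Q ⊆ colsEndingIn M Q :=
  image_subset_image (filter_subset_filter _ hM')

lemma shadowCount_eq_card_pointsBetween {M : Finset DPair}
    (hinj : Set.InjOn (fun m : DPair => m.1.2) M) (Q : SquareSpec) :
    shadowCount M Q = #(pointsBetween (sourceCols M) (colsEndingIn M Q)) := by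
  rw [shadowCount, sourceCols, pointsBetween, filter_image,
    card_image_of_injOn (hinj.mono (coe_subset.2 (filter_subset _ _)))]
  refine congrArg card (filter_congr fun m _ => ?_)
  simp only [colsEndingIn, sourceCols, exists_mem_image, mem_filter, and_assoc]

section Routed

variable {ℓ d : ℕ} {M : Finset DPair} {P : ∀ m : {m // m ∈ M}, (gridG ℓ).Walk m.1.1 m.1.2}
  {Qs : Finset SquareSpec} {Q Q' : SquareSpec}

lemma mem_colsVisiting {m : {m // m ∈ M}} {z : Vtx} (hz : z ∈ (P m).support)
    (hzQ : memSquare z Q) : m.1.1.2 ∈ colsVisiting P Q :=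
  mem_image_of_mem _ (mem_filter.2 ⟨mem_univ _, z, hz, hzQ⟩)

lemma colsEndingIn_subset_colsVisiting : colsEndingIn M Q ⊆ colsVisiting P Q := fun a ha => by
  obtain ⟨m, hm, rfl⟩ := mem_colsEndingIn.1 ha
  exact mem_colsVisiting (P m).end_mem_support hm

/-- Each visiting walk uses up a vertex of the frame of the square. -/
lemma card_colsVisiting_le (hP : ∀ m m' z, z ∈ (P m).support → z ∈ (P m').support → m = m')
    (hQs : IsCanonicalSquares ℓ d Qs) (hQ : Q ∈ Qs) (hsrc : ∀ m ∈ M, ¬ memSquare m.1 Q) :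
    #(colsVisiting P Q) ≤ 4 * d := by
  obtain ⟨⟨r, r', -, -, -, hr⟩, c, c', -, -, -, hc⟩ := hQs.isIntervalIn hQ
  have hcard := hQs.card_eq hQ
  obtain ⟨_, _⟩ := Q
  obtain rfl := hr
  obtain rfl := hc
  refine card_image_le.trans ((card_le_card_of_forall_subsingleton
    (t := frame r r' c c') (fun m z => z ∈ (P m).support) (fun m hm => ?_)
    fun z _ m hm m' hm' => hP m m' z hm.2 hm'.2).trans ((card_frame_le r r' c c').trans ?_))
  · obtain ⟨z, hz, hzframe⟩ :=
      exists_mem_frame_of_enters (P m) (hsrc m m.2) (mem_filter.1 hm).2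
    exact ⟨z, hzframe, hz⟩
  · dsimp only at hcard; omega

lemma exists_walk_through_square (h₁ : IsIntervalIn ℓ Q.1) (h₂ : IsIntervalIn ℓ Q.2)
    (P : ∀ m : {m // m ∈ M}, (gridG ℓ).Walk m.1.1 m.1.2) {m m' : {m // m ∈ M}}
    (hm : memSquare m.1.2 Q) (hm' : memSquare m'.1.2 Q) :
    ∃ W : (gridG ℓ).Walk m.1.1 m'.1.1, ∀ z ∈ W.support,
      (∃ k, (k = m ∨ k = m') ∧ z ∈ (P k).support) ∨ memSquare z Q := by
  obtain ⟨W, hW⟩ := exists_walk_in_square h₁ h₂ hm hm'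
  refine ⟨((P m).append W).append (P m').reverse, fun z hz => ?_⟩
  rw [SimpleGraph.Walk.mem_support_append_iff, SimpleGraph.Walk.mem_support_append_iff,
    SimpleGraph.Walk.support_reverse, List.mem_reverse] at hz
  rcases hz with (hz | hz) | hz
  · exact .inl ⟨m, .inl rfl, hz⟩
  · exact .inr (hW z hz)
  · exact .inl ⟨m', .inr rfl, hz⟩

/-- Two of the paths together with `Q` join `a` to `a'`, two others together with `Q'` join `b` to
`b'`. By planarity these connections meet, so that one of the four paths visits the square of the
other two. -/
lemma not_crosses_colsEndingIn (hP : ∀ m m' z, z ∈ (P m).support → z ∈ (P m').support → m = m')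
    (hsrc : ∀ m ∈ M, m.1.1 = 1) (hQs : IsCanonicalSquares ℓ d Qs) (hQ : Q ∈ Qs) (hQ' : Q' ∈ Qs)
    (hne : Q ≠ Q') : ¬ Crosses (colsEndingIn M Q \ colsVisiting P Q')
      (colsEndingIn M Q' \ colsVisiting P Q) := by
  rintro ⟨a, ha, b, hb, a', ha', b', hb', hab, hba', hab'⟩
  simp only [mem_sdiff, mem_colsEndingIn] at ha hb ha' hb'
  obtain ⟨⟨m, hm, rfl⟩, hmQ'⟩ := ha
  obtain ⟨⟨k, hk, rfl⟩, hkQ⟩ := hb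
  obtain ⟨⟨m', hm', rfl⟩, hm'Q'⟩ := ha'
  obtain ⟨⟨k', hk', rfl⟩, hk'Q⟩ := hb'
  obtain ⟨hQ₁, hQ₂⟩ := hQs.isIntervalIn hQ
  obtain ⟨hQ'₁, hQ'₂⟩ := hQs.isIntervalIn hQ'
  obtain ⟨W, hW⟩ := exists_walk_through_square hQ₁ hQ₂ P hm hm'
  obtain ⟨W', hW'⟩ := exists_walk_through_square hQ'₁ hQ'₂ P hk hk'
  obtain ⟨z, hz, hz'⟩ := exists_mem_support_of_interleaved (hsrc m m.2) (hsrc m' m'.2)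
    (hsrc k k.2) (hsrc k' k'.2) hab hba' hab' W W'
  rcases hW z hz with ⟨i, hi, hzi⟩ | hzQ <;> rcases hW' z hz' with ⟨j, hj, hzj⟩ | hzQ'
  · obtain rfl := hP i j z hzi hzj
    have hiQ : memSquare i.1.2 Q := by rcases hi with rfl | rfl <;> assumption
    have hiQ' : memSquare i.1.2 Q' := by rcases hj with rfl | rfl <;> assumption
    exact hne (hQs.eq_of_memSquare hQ hQ' hiQ hiQ')
  · rcases hi with rfl | rfl
    exacts [hmQ' (mem_colsVisiting hzi hzQ'), hm'Q' (mem_colsVisiting hzi hzQ')]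
  · rcases hj with rfl | rfl
    exacts [hkQ (mem_colsVisiting hzj hzQ), hk'Q (mem_colsVisiting hzj hzQ)]
  · exact hne (hQs.eq_of_memSquare hQ hQ' hzQ hzQ')

lemma isNearlyNoncrossing_cols
    (hP : ∀ m m' z, z ∈ (P m).support → z ∈ (P m').support → m = m')
    (hinj : Set.InjOn (fun m : DPair => m.1.2) M) (hsrc : ∀ m ∈ M, m.1.1 = 1)
    (hQs : IsCanonicalSquares ℓ d Qs) (hdisj : ∀ Q ∈ Qs, 1 ∉ Q.1) :
    IsNearlyNoncrossing Qs (colsEndingIn M) (colsVisiting P) (4 * d) where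
  pairwiseDisjoint Q hQ Q' hQ' hne := disjoint_left.2 fun a ha ha' => by
    obtain ⟨m, hm, rfl⟩ := mem_colsEndingIn.1 ha
    obtain ⟨m', hm', heq⟩ := mem_colsEndingIn.1 ha'
    obtain rfl := Subtype.ext (hinj m'.2 m.2 heq)
    exact hne (hQs.eq_of_memSquare hQ hQ' hm hm')
  not_crosses _ hQ _ hQ' hne := not_crosses_colsEndingIn hP hsrc hQs hQ hQ' hne
  subset _ _ := colsEndingIn_subset_colsVisiting
  card_exceptional_le Q hQ := card_colsVisiting_le hP hQs hQ fun m hm hmem =>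
    hdisj Q hQ (hsrc m hm ▸ hmem.1)

end Routed

lemma IsCanonicalSquares.exists_subset_shadowCount_le {ℓ lam d : ℕ} {Qs : Finset SquareSpec}
    (hQs : IsCanonicalSquares ℓ d Qs) (hlam₀ : 0 < lam) (hlam : ℓ < 2 ^ lam)
    {M : Finset DPair} (hsrc : ∀ m ∈ M, OnTopRow ℓ m.1)
    (hM : NodeDisjointRoutable (gridG ℓ) M) (hdisj : ∀ Q ∈ Qs, 1 ∉ Q.1)
    (hdest : ∀ m ∈ M, ∃ Q ∈ Qs, memSquare m.2 Q) :
    ∃ M' ⊆ M, #M ≤ 32 * (lam + 1) * #M' ∧ ∀ Q ∈ Qs, shadowCount M' Q ≤ 96 * lam * (4 * d) := by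
  have hrow : ∀ m ∈ M, m.1.1 = 1 := fun m hm => (hsrc m hm).1
  have hinj := hM.injOn_source_col hrow
  obtain ⟨P, hP⟩ := hM.exists_walks
  have hcols : Qs.biUnion (colsEndingIn M) = sourceCols M := by
    refine (biUnion_subset.2 fun Q _ => colsEndingIn_subset Q).antisymm fun a ha => ?_
    obtain ⟨m, hm, rfl⟩ := mem_image.1 ha
    obtain ⟨Q, hQ, hmQ⟩ := hdest m hm
    exact mem_biUnion.2 ⟨Q, hQ, mem_colsEndingIn.2 ⟨⟨m, hm⟩, hmQ, rfl⟩⟩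
  obtain ⟨S', hS', hcard, hsparse⟩ := (isNearlyNoncrossing_cols hP hinj hrow hQs hdisj)
    |>.exists_sparse_subset hlam₀ fun Q _ a ha => by
      obtain ⟨m, -, rfl⟩ := mem_colsEndingIn.1 ha
      exact (hsrc m m.2).2.2.trans_lt hlam
  rw [hcols] at hS' hcard
  obtain ⟨M', hM', rfl⟩ := subset_image_iff.1 hS'
  have hM' := coe_subset.1 hM'
  have hinj' := hinj.mono (coe_subset.2 hM')
  rw [sourceCols, card_image_of_injOn hinj, card_image_of_injOn hinj'] at hcard
  refine ⟨M', hM', hcard, fun Q hQ => ?_⟩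
  rw [shadowCount_eq_card_pointsBetween hinj']
  exact (card_le_card <| pointsBetween_mono_right _ <| subset_inter (colsEndingIn_subset Q)
    (colsEndingIn_mono hM' Q)).trans (hsparse Q hQ)

end OneLevel

/-! ### All levels, and the final sampling -/

section AllLevels

lemma antitone_shadowCount_le {Qs : Finset SquareSpec} {c : ℕ} :
    Antitone fun M => ∀ Q ∈ Qs, shadowCount M Q ≤ c := by
  intro M' M hM' h Q hQ
  refine (card_le_card fun m hm => ?_).trans (h Q hQ)
  obtain ⟨hm, m₁, hm₁, hQ₁, m₂, hm₂, hQ₂⟩ := mem_filter.1 hm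
  exact mem_filter.2 ⟨hM' hm, m₁, hM' hm₁, hQ₁, m₂, hM' hm₂, hQ₂⟩

lemma exists_sampled_pairs {M : Finset DPair} (hinj : Set.InjOn (fun m : DPair => m.1.2) M)
    {K : ℕ} (hK : 0 < K) : ∃ M' ⊆ M, #M ≤ K * #M' ∧
      ∀ Q, K * shadowCount M' Q ≤ shadowCount M Q + K := by
  obtain ⟨S', hS', hcard, hsample⟩ := exists_sample (sourceCols M) hK
  obtain ⟨M', hM', rfl⟩ := subset_image_iff.1 hS'
  have hinj' := hinj.mono hM'
  refine ⟨M', coe_subset.1 hM', ?_, fun Q => ?_⟩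
  · rwa [sourceCols, card_image_of_injOn hinj, card_image_of_injOn hinj'] at hcard
  · rw [shadowCount_eq_card_pointsBetween hinj, shadowCount_eq_card_pointsBetween hinj']
    refine (hsample _ (colsEndingIn_subset Q)).trans ?_
    gcongr
    exact pointsBetween_mono_right _ (colsEndingIn_mono (coe_subset.1 hM') Q)

variable {ℓ η ρ : ℕ} {Qs : ℕ → Finset SquareSpec}

lemma IsHierSquares.exists_memSquare (hH : IsHierSquares ℓ η ρ Qs) {z : Vtx}
    (hz : ∃ Q ∈ Qs ρ, memSquare z Q) {h : ℕ} (h₁ : 1 ≤ h) (hρ : h ≤ ρ) :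
    ∃ Q ∈ Qs h, memSquare z Q := by
  induction hρ using Nat.decreasingInduction with
  | self => exact hz
  | of_succ k hk ih =>
    obtain ⟨Q, hQ, hzQ⟩ := ih (by omega)
    obtain ⟨Q', hQ', hrows, hcols⟩ := hH.2 (k + 1) (by omega) hk Q hQ
    exact ⟨Q', hQ', hrows hzQ.1, hcols hzQ.2⟩

lemma hasShadowProp_empty {β : ℝ} (hβ : 0 ≤ β) (d : ℕ) (Q : SquareSpec) :
    HasShadowProp β d ∅ Q := by
  simp only [HasShadowProp, shadowCount, filter_empty, card_empty, Nat.cast_zero]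
  positivity

lemma hasShadowProp_of_mul_le {M : Finset DPair} {Q : SquareSpec} {d : ℕ} (hη : 0 < η)
    (h : η ^ 2 * shadowCount M Q ≤ d) : HasShadowProp (1 / (η : ℝ) ^ 2) d M Q := by
  rw [HasShadowProp, one_div_mul_eq_div, le_div_iff₀' (by positivity)]
  exact_mod_cast h

lemma IsHierSquares.exists_subset_shadowCount_le (hH : IsHierSquares ℓ η ρ Qs) {lam : ℕ}
    (hlam₀ : 0 < lam) (hlam : ℓ < 2 ^ lam)
    (hdisj : ∀ h, 1 ≤ h → h ≤ ρ → ∀ Q ∈ Qs h, 1 ∉ Q.1) {M : Finset DPair}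
    (hsrc : ∀ m ∈ M, OnTopRow ℓ m.1) (hM : NodeDisjointRoutable (gridG ℓ) M)
    (hdest : ∀ m ∈ M, ∃ Q ∈ Qs ρ, memSquare m.2 Q) :
    ∃ M' ⊆ M, #M ≤ (32 * (lam + 1)) ^ ρ * #M' ∧ ∀ h ∈ Icc 1 ρ, ∀ Q ∈ Qs h,
      shadowCount M' Q ≤ 96 * lam * (4 * η ^ (ρ - h + 3)) := by
  obtain ⟨M', hM', hcard, hshadow⟩ := exists_subset_forall_of_antitone (Icc 1 ρ) M
    (32 * (lam + 1))
    (fun h M' => ∀ Q ∈ Qs h, shadowCount M' Q ≤ 96 * lam * (4 * η ^ (ρ - h + 3)))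
    (fun _ _ => antitone_shadowCount_le) fun h hh A hA => by
      obtain ⟨h₁, hρ⟩ := mem_Icc.1 hh
      exact (hH.1 h h₁ hρ).exists_subset_shadowCount_le hlam₀ hlam (fun m hm => hsrc m (hA hm))
        (hM.mono hA) (hdisj h h₁ hρ)
        fun m hm => hH.exists_memSquare (hdest m (hA hm)) h₁ hρ
  rw [Nat.card_Icc, Nat.add_sub_cancel] at hcard
  exact ⟨M', hM', hcard, hshadow⟩

/-- Sampling every `768 * lam * η ^ 2`-th source turns shadows of size `384 * lam * d` into shadows
of size `d / η ^ 2`, rounding included because `d ≥ η ^ 3 ≥ 2 * η ^ 2`. -/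
lemma IsHierSquares.exists_subset_hasShadowProp (hH : IsHierSquares ℓ η ρ Qs) {lam : ℕ}
    (hlam₀ : 0 < lam) (hlam : ℓ < 2 ^ lam) (hη : 2 ≤ η)
    (hdisj : ∀ h, 1 ≤ h → h ≤ ρ → ∀ Q ∈ Qs h, 1 ∉ Q.1) {M : Finset DPair}
    (hsrc : ∀ m ∈ M, OnTopRow ℓ m.1) (hM : NodeDisjointRoutable (gridG ℓ) M)
    (hdest : ∀ m ∈ M, ∃ Q ∈ Qs ρ, memSquare m.2 Q) :
    ∃ M' ⊆ M, #M ≤ (32 * (lam + 1)) ^ ρ * (768 * lam * η ^ 2) * #M' ∧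
      ∀ h, 1 ≤ h → h ≤ ρ → ∀ Q ∈ Qs h,
        HasShadowProp (1 / (η : ℝ) ^ 2) (η ^ (ρ - h + 3)) M' Q := by
  obtain ⟨M₁, hM₁, hcard₁, hshadow₁⟩ :=
    hH.exists_subset_shadowCount_le hlam₀ hlam hdisj hsrc hM hdest
  have hinj := (hM.mono hM₁).injOn_source_col fun m hm => (hsrc m (hM₁ hm)).1
  obtain ⟨M₂, hM₂, hcard₂, hshadow₂⟩ :=
    exists_sampled_pairs hinj (K := 768 * lam * η ^ 2) (by positivity)
  refine ⟨M₂, hM₂.trans hM₁, ?_, fun h h₁ hρ Q hQ => hasShadowProp_of_mul_le (by omega) ?_⟩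
  · calc #M ≤ (32 * (lam + 1)) ^ ρ * #M₁ := hcard₁
      _ ≤ (32 * (lam + 1)) ^ ρ * (768 * lam * η ^ 2 * #M₂) := by gcongr
      _ = (32 * (lam + 1)) ^ ρ * (768 * lam * η ^ 2) * #M₂ := by ring
  set d := η ^ (ρ - h + 3)
  have hd : 2 * η ^ 2 ≤ d :=
    calc 2 * η ^ 2 ≤ η * η ^ 2 := by gcongr
      _ = η ^ 3 := by ring
      _ ≤ d := Nat.pow_le_pow_right (by omega) (by omega)
  refine Nat.le_of_mul_le_mul_left ?_ (show 0 < 768 * lam by positivity)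
  calc 768 * lam * (η ^ 2 * shadowCount M₂ Q)
      = 768 * lam * η ^ 2 * shadowCount M₂ Q := by ring
    _ ≤ shadowCount M₁ Q + 768 * lam * η ^ 2 := hshadow₂ Q
    _ ≤ 96 * lam * (4 * d) + 768 * lam * η ^ 2 := by
      gcongr; exact hshadow₁ h (mem_Icc.2 ⟨h₁, hρ⟩) Q hQ
    _ = 384 * lam * d + 384 * lam * (2 * η ^ 2) := by ring
    _ ≤ 384 * lam * d + 384 * lam * d := by gcongr
    _ = 768 * lam * d := by ring

end AllLevels

/-! ### The total loss -/

section Loss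

lemma lg_mul_self (ℓ : ℕ) : lg (ℓ * ℓ) = 2 * Real.logb 2 ℓ := by
  rw [lg, Nat.cast_mul, ← sq, Real.logb_pow, Nat.cast_ofNat]

lemma natLog_le_lg_mul_self_div_two (ℓ : ℕ) : (Nat.log 2 ℓ : ℝ) ≤ lg (ℓ * ℓ) / 2 := by
  have h := Real.natLog_le_logb ℓ 2
  rw [lg_mul_self]
  push_cast at h
  linarith

lemma two_mul_le_sqrt_lg_of_pow_le {ℓ k : ℕ} (hℓ : 2 ≤ ℓ)
    (h : (2 ^ ⌈√(lg (ℓ * ℓ))⌉₊) ^ k ≤ ℓ) : 2 * (k : ℝ) ≤ √(lg (ℓ * ℓ)) := by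
  have hlog₀ : 0 < Real.logb 2 ℓ := Real.logb_pos one_lt_two (by exact_mod_cast hℓ)
  set x := √(lg (ℓ * ℓ)) with hx
  have hx₀ : 0 < x := Real.sqrt_pos.2 (by rw [lg_mul_self]; linarith)
  have hsq : x * x = 2 * Real.logb 2 ℓ := by
    rw [hx, Real.mul_self_sqrt (by rw [lg_mul_self]; linarith), lg_mul_self]
  have hlog : ⌈x⌉₊ * k ≤ Real.logb 2 ℓ := by
    rw [Real.le_logb_iff_rpow_le one_lt_two (by positivity)]
    rw [← pow_mul] at h
    exact_mod_cast h
  have hceil : x * k ≤ ⌈x⌉₊ * k := by gcongr; exact Nat.le_ceil x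
  refine le_of_mul_le_mul_left ?_ hx₀
  linarith

/-- A pair belonging to the system forces the grid to be large: a square of the first level has
side `η ^ (ρ + 2)` and misses the top row. -/
lemma IsHierSquares.two_mul_add_two_le_sqrt_lg {ℓ ρ : ℕ} {Qs : ℕ → Finset SquareSpec}
    (hH : IsHierSquares ℓ (2 ^ ⌈√(lg (ℓ * ℓ))⌉₊) ρ Qs) (hρ : 1 ≤ ρ) {Q : SquareSpec}
    (hQ : Q ∈ Qs 1) (hdisj : 1 ∉ Q.1) : 2 * ((ρ : ℝ) + 2) ≤ √(lg (ℓ * ℓ)) := by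
  have hQs := hH.1 1 le_rfl hρ
  have hℓ : 2 ≤ ℓ := by
    obtain ⟨a, b, ha, hab, hb, hIcc⟩ := (hQs.isIntervalIn hQ).1
    rw [hIcc, mem_Icc] at hdisj
    omega
  have hside := hQs.le hQ
  rw [show ρ - 1 + 3 = ρ + 2 by omega] at hside
  exact_mod_cast two_mul_le_sqrt_lg_of_pow_le hℓ hside

lemma two_le_logb_of_six_le_sqrt {X : ℝ} (hX : 6 ≤ √X) : 2 ≤ Real.logb 2 X := by
  have hX₀ : 0 ≤ X := (Real.sqrt_pos.1 (by linarith)).le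
  have hX' : 36 ≤ X := by nlinarith [Real.sq_sqrt hX₀]
  rw [Real.le_logb_iff_rpow_le one_lt_two (by linarith)]
  norm_num
  linarith

/-- With `L = log₂ X`, each level costs at most `X² = 2 ^ (2 L)`, and the sampling at most
`X³ = 2 ^ (3 L)` times `η² ≤ 2 ^ (2 √X + 2)`. -/
lemma loss_le_rpow {X : ℝ} {lam ρ : ℕ} (hlam : (lam : ℝ) ≤ X / 2 + 1) (hρ : 1 ≤ ρ)
    (hρX : 2 * ((ρ : ℝ) + 2) ≤ √X) :
    (32 * ((lam : ℝ) + 1)) ^ ρ * (768 * lam * (2 ^ ⌈√X⌉₊) ^ 2) ≤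
      (2 : ℝ) ^ (2 * √X * Real.logb 2 X) := by
  have hρ' : (1 : ℝ) ≤ ρ := by exact_mod_cast hρ
  have hL := two_le_logb_of_six_le_sqrt (X := X) (by linarith)
  have hX₀ : 0 < X := Real.sqrt_pos.1 (by linarith)
  have hX : 36 ≤ X := by nlinarith [Real.sq_sqrt hX₀.le]
  set x := √X
  set L := Real.logb 2 X
  have hXpow : ∀ k : ℕ, X ^ k = 2 ^ (L * k) := fun k => by
    rw [Real.rpow_mul_natCast two_pos.le, Real.rpow_logb two_pos (by norm_num) hX₀]
  have hlevel : 32 * ((lam : ℝ) + 1) ≤ X ^ 2 := by nlinarith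
  have hsample : 768 * (lam : ℝ) ≤ X ^ 3 := by nlinarith [mul_le_mul hX hX (by norm_num) hX₀.le]
  have hη : ((2 : ℝ) ^ ⌈x⌉₊) ^ 2 ≤ 2 ^ (2 * x + 2) := by
    rw [← pow_mul, ← Real.rpow_natCast]
    refine Real.rpow_le_rpow_of_exponent_le one_le_two ?_
    have := Nat.ceil_lt_add_one (Real.sqrt_nonneg X)
    push_cast
    linarith
  calc (32 * ((lam : ℝ) + 1)) ^ ρ * (768 * lam * (2 ^ ⌈x⌉₊) ^ 2)
      ≤ (X ^ 2) ^ ρ * (X ^ 3 * 2 ^ (2 * x + 2)) := by gcongr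
    _ = 2 ^ (L * (2 * ρ + 3) + (2 * x + 2)) := by
      rw [← mul_assoc, ← pow_mul, ← pow_add, hXpow, ← Real.rpow_add two_pos]
      push_cast
      rfl
    _ ≤ 2 ^ (2 * x * L) := Real.rpow_le_rpow_of_exponent_le one_le_two (by nlinarith)

lemma le_mul_rpow_of_le_loss_mul {X opt a b : ℝ} {lam ρ : ℕ} (hlam : (lam : ℝ) ≤ X / 2 + 1)
    (hρ : 1 ≤ ρ) (hρX : 2 * ((ρ : ℝ) + 2) ≤ √X) (hb : 0 ≤ b) (hopt : opt ≤ a * 2 ^ (2 * √X))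
    (hab : a ≤ (32 * ((lam : ℝ) + 1)) ^ ρ * (768 * lam * (2 ^ ⌈√X⌉₊) ^ 2) * b) :
    opt ≤ b * 2 ^ (8 * √X * Real.logb 2 X) := by
  have hρ' : (1 : ℝ) ≤ ρ := by exact_mod_cast hρ
  have hL := two_le_logb_of_six_le_sqrt (X := X) (by linarith)
  have hx := Real.sqrt_nonneg X
  calc opt ≤ a * 2 ^ (2 * √X) := hopt
    _ ≤ 2 ^ (2 * √X * Real.logb 2 X) * b * 2 ^ (2 * √X) := by
      gcongr; exact hab.trans (mul_le_mul_of_nonneg_right (loss_le_rpow hlam hρ hρX) hb)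
    _ = b * 2 ^ (2 * √X * Real.logb 2 X + 2 * √X) := by rw [Real.rpow_add two_pos]; ring
    _ ≤ b * 2 ^ (8 * √X * Real.logb 2 X) := by
      gcongr
      · exact one_le_two
      · nlinarith [mul_nonneg hx (show 0 ≤ Real.logb 2 X - 2 by linarith)]

end Loss

theorem statement1_general
    (ℓ n : ℕ) (hn : n = ℓ * ℓ) (η ρ : ℕ) (hη : η = 2 ^ ⌈Real.sqrt (lg n)⌉₊) (hρ : 1 ≤ ρ)
    (M : Finset DPair) (hsrc : ∀ m ∈ M, OnTopRow ℓ m.1)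
    (Qs : ℕ → Finset SquareSpec) (hH : IsHierSquares ℓ η ρ Qs)
    (hdisj : ∀ h, 1 ≤ h → h ≤ ρ → ∀ Q ∈ Qs h, (1 : ℕ) ∉ Q.1)
    (Mtil : Finset DPair)
    (hMtil : ∀ m, m ∈ Mtil ↔ m ∈ M ∧ ∃ Q ∈ Qs ρ, memSquare m.2 Q)
    (OPT : ℝ)
    (hsol : ∃ M₀ ⊆ Mtil, OPT / 2 ^ (2 * Real.sqrt (lg n)) ≤ (M₀.card : ℝ) ∧
      NodeDisjointRoutable (gridG ℓ) M₀) :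
    ∃ Ms ⊆ Mtil,
      OPT / 2 ^ (8 * Real.sqrt (lg n) * Real.logb 2 (lg n)) ≤ (Ms.card : ℝ) ∧
      NodeDisjointRoutable (gridG ℓ) Ms ∧
      ∀ h, 1 ≤ h → h ≤ ρ → ∀ Q ∈ Qs h,
        HasShadowProp (1 / (η : ℝ) ^ 2) (η ^ (ρ - h + 3)) Ms Q := by
  subst hn hη
  obtain ⟨M₀, hM₀, hcard₀, hrout⟩ := hsol
  have hdest : ∀ m ∈ M₀, ∃ Q ∈ Qs ρ, memSquare m.2 Q := fun m hm => ((hMtil m).1 (hM₀ hm)).2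
  simp only [div_le_iff₀ (Real.rpow_pos_of_pos (two_pos (α := ℝ)) _)] at hcard₀ ⊢
  rcases M₀.eq_empty_or_nonempty with rfl | ⟨m₀, hm₀⟩
  · exact ⟨∅, empty_subset _, by simpa using hcard₀, hrout, fun _ _ _ _ _ =>
      hasShadowProp_empty (by positivity) _ _⟩
  obtain ⟨Q, hQ, -⟩ := hH.exists_memSquare (hdest m₀ hm₀) le_rfl hρ
  have hρX := hH.two_mul_add_two_le_sqrt_lg hρ hQ (hdisj 1 le_rfl hρ Q hQ)
  have hη : 2 ≤ 2 ^ ⌈√(lg (ℓ * ℓ))⌉₊ :=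
    Nat.le_self_pow (Nat.ceil_pos.2 (lt_of_lt_of_le (by positivity) hρX)).ne' 2
  obtain ⟨Ms, hMs, hcard, hshadow⟩ := hH.exists_subset_hasShadowProp (Nat.succ_pos _)
    (Nat.lt_pow_succ_log_self one_lt_two ℓ) hη hdisj
    (fun m hm => hsrc m ((hMtil m).1 (hM₀ hm)).1) hrout hdest
  have hlam : ((Nat.log 2 ℓ + 1 : ℕ) : ℝ) ≤ lg (ℓ * ℓ) / 2 + 1 := by
    push_cast; gcongr; exact natLog_le_lg_mul_self_div_two ℓ
  exact ⟨Ms, hMs.trans hM₀, le_mul_rpow_of_le_loss_mul hlam hρ hρX (Nat.cast_nonneg _) hcard₀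
    (by exact_mod_cast hcard), hrout.mono hMs, hshadow⟩

/-- Corollary: shadow property of all squares of a hierarchical system. -/
theorem statement1
    (ℓ n : ℕ) (hn : n = ℓ * ℓ) (hlog : (2 : ℝ) ^ (27 : ℕ) ≤ lg n)
    (η ρ : ℕ) (hη : η = 2 ^ ⌈Real.sqrt (lg n)⌉₊)
    (hρ : 1 ≤ ρ) (hρ' : (ρ : ℝ) ≤ Real.sqrt (lg n))
    (M : Finset DPair) (hsrc : ∀ m ∈ M, OnTopRow ℓ m.1)
    (Qs : ℕ → Finset SquareSpec) (hH : IsHierSquares ℓ η ρ Qs)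
    (hdisj : ∀ h, 1 ≤ h → h ≤ ρ → ∀ Q ∈ Qs h, (1 : ℕ) ∉ Q.1)
    (Mtil : Finset DPair)
    (hMtil : ∀ m, m ∈ Mtil ↔ m ∈ M ∧ ∃ Q ∈ Qs ρ, memSquare m.2 Q)
    (OPT : ℕ) (hOPT : 0 < OPT)
    (hsol : ∃ M₀ ⊆ Mtil, (OPT : ℝ) / 2 ^ (2 * Real.sqrt (lg n)) ≤ (M₀.card : ℝ) ∧
      NodeDisjointRoutable (gridG ℓ) M₀) :
    ∃ Ms ⊆ Mtil,
      (OPT : ℝ) / 2 ^ (8 * Real.sqrt (lg n) * Real.logb 2 (lg n)) ≤ (Ms.card : ℝ) ∧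
      NodeDisjointRoutable (gridG ℓ) Ms ∧
      ∀ h, 1 ≤ h → h ≤ ρ → ∀ Q ∈ Qs h,
        HasShadowProp (1 / (η : ℝ) ^ 2) (η ^ (ρ - h + 3)) Ms Q :=
  statement1_general ℓ n hn η ρ hη hρ M hsrc Qs hH hdisj Mtil hMtil OPT hsol
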